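/- arXiv:1011.3062 — 2 statements merged into one kernel-verified Lean document; each statement's English description precedes it below -/
import Mathlib

section
/- Assume |A| − |B| = 1. Fix i ∈ A and c_i ∈ ℝ, and assume that for every o_i ≤ c_i there exists a stable alternating spanning tree generating offer profile O with O_i = o_i. Let O¹ and O² be two stable alternating spanning tree generating offer profiles with O¹_i ≤ c_i and O²_i ≤ c_i. If O¹_i < O²_i, then O¹_{i'} < O²_{i'} for every i' ∈ A, and O¹_{j'} > O²_{j'} for every j' ∈ B. -/
open Classical

variable {V : Type*}

namespace GSM

/-- Symmetric adjacency induced by a set of (directed A→B) edges. -/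
def Adj (E : Finset (V × V)) (a b : V) : Prop := (a, b) ∈ E ∨ (b, a) ∈ E

/-- A path from `k` to `k'`: a nonempty list of distinct nodes starting at `k`,
ending at `k'`, with consecutive nodes adjacent. -/
def IsPath (E : Finset (V × V)) (p : List V) (k k' : V) : Prop :=
  p.head? = some k ∧ p.getLast? = some k' ∧ p.Nodup ∧ p.Chain' (Adj E)

/-- The offer induced at the end of a path, starting from offer `x` at its head:
`O_{x_0} = x` and `O_{x_{n+1}} = v_{x_{n+1}}(x_n, O_{x_n})`. -/
def pathOffer (v : V → V → ℝ → ℝ) : List V → ℝ → ℝ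
  | [], x => x
  | [_], x => x
  | a :: b :: rest, x => pathOffer v (b :: rest) (v b a x)

/-- The equality subgraph of an offer profile: edges `(i,j) ∈ E` with `O j = v j i (O i)`. -/
noncomputable def EQg (E : Finset (V × V)) (v : V → V → ℝ → ℝ) (O : V → ℝ) : Finset (V × V) :=
  E.filter fun e => O e.2 = v e.2 e.1 (O e.1)

/-- Stability of an offer profile: for every edge `(i,j) ∈ E`, `O j ≥ v j i (O i)`. -/
def Stable (E : Finset (V × V)) (v : V → V → ℝ → ℝ) (O : V → ℝ) : Prop :=
  ∀ e ∈ E, v e.2 e.1 (O e.1) ≤ O e.2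

/-- A matching: no two distinct edges share a node. -/
def IsMatching (M : Finset (V × V)) : Prop :=
  ∀ e ∈ M, ∀ e' ∈ M, e ≠ e' → e.1 ≠ e'.1 ∧ e.1 ≠ e'.2 ∧ e.2 ≠ e'.1 ∧ e.2 ≠ e'.2

/-- A node is matched if it lies on an edge of the matching. -/
def Matched (M : Finset (V × V)) (x : V) : Prop := ∃ e ∈ M, e.1 = x ∨ e.2 = x

/-- A near-perfect matching relative to the node set `X`: exactly one node of `X` is unmatched. -/
def NearPerfect (M : Finset (V × V)) (X : Finset V) : Prop :=
  ∃! x, x ∈ X ∧ ¬ Matched M x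

/-- Undirected membership of an edge in an edge set. -/
def SymMem (M : Finset (V × V)) (e : V × V) : Prop := e ∈ M ∨ e.swap ∈ M

/-- A list of nodes is alternating for the matching `M`: consecutive edges alternate
between edges of `M` and non-edges of `M`. -/
def IsAlternating (M : Finset (V × V)) (p : List V) : Prop :=
  List.Chain' (fun e e' => SymMem M e ↔ ¬ SymMem M e') (p.zip p.tail)

/-- `T` is a tree on the node set `X`: all its edges join nodes of `X` and any two
nodes of `X` are joined by a unique path in `T`. -/
def IsTreeOn (T : Finset (V × V)) (X : Finset V) : Prop :=
  (∀ e ∈ T, e.1 ∈ X ∧ e.2 ∈ X) ∧ ∀ x ∈ X, ∀ y ∈ X, ∃! p : List V, IsPath T p x y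

/-- Degree of a node: number of incident edges of `T`. -/
noncomputable def degr (T : Finset (V × V)) (x : V) : ℕ :=
  (T.filter fun e => e.1 = x ∨ e.2 = x).card

/-- An alternating tree on node set `X` for the matching `M`, rooted at `r`:
a tree containing exactly one unmatched node `r`, in which every path from `r`
is an alternating path, every node at odd distance from `r` has degree 2, and
every leaf is at even distance from `r`. -/
def IsAltTreeOn (T M : Finset (V × V)) (r : V) (X : Finset V) : Prop :=
  IsTreeOn T X ∧ r ∈ X ∧ ¬ Matched M r ∧ (∀ x ∈ X, x ≠ r → Matched M x) ∧
  (∀ x ∈ X, ∀ p : List V, IsPath T p r x → IsAlternating M p) ∧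
  (∀ x ∈ X, ∀ p : List V, IsPath T p r x →
    (Odd (p.length - 1) → degr T x = 2) ∧ (degr T x = 1 → Even (p.length - 1)))

/-- A stable alternating spanning tree generating offer profile: a stable offer profile
whose equality subgraph contains a near-perfect matching together with an associated
alternating spanning tree. -/
def SASTG (A B : Finset V) (E : Finset (V × V)) (v : V → V → ℝ → ℝ) (O : V → ℝ) : Prop :=
  Stable E v O ∧
  ∃ M T r, IsMatching M ∧ M ⊆ EQg E v O ∧ NearPerfect M (A ∪ B) ∧
    T ⊆ EQg E v O ∧ IsAltTreeOn T M r (A ∪ B)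

/-- `y` is a child of `x` in the tree `T` rooted at `r`: there is a path from `r`
to `y` in `T` whose second-to-last node is `x`. -/
def IsChild (T : Finset (V × V)) (r x y : V) : Prop :=
  ∃ p : List V, IsPath T p r y ∧ p.dropLast.getLast? = some x

/-- A node reachable by an alternating path from some unmatched node of `A`. -/
def AltReach (G M : Finset (V × V)) (A : Finset V) (x : V) : Prop :=
  ∃ i ∈ A, ¬ Matched M i ∧ ∃ p : List V, IsPath G p i x ∧ IsAlternating M p

/-!
Let `D` be the nodes of `A` whose offer is higher in `O₂` than in `O₁`, and `U` the nodes of `B`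
whose offer is lower. Stability of one profile against the equality edges of the other shows that
`EQ(O₂)` sends `D` into `U`, while `EQ(O₁)` sends `A \ D` into `B \ U`. An alternating spanning tree
yields a Hall condition: a proper subset of `A` has at least as many neighbours as elements, because
if the root lies in the subset then the tree must leave it through a matching edge at one of its
neighbours. If `D` were a nonempty proper subset of `A`, applying this to `D` and to `A \ D` would
give `|A| ≤ |B|`. Hence `D = A`, and the near-perfect matching in `EQ(O₂)` then forces `U = B`.
-/

section Alternating

variable {M T : Finset (V × V)}

theorem isAlternating_cons_cons_cons {x y z : V} {p : List V} :
    IsAlternating M (x :: y :: z :: p) ↔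
      (SymMem M (x, y) ↔ ¬ SymMem M (y, z)) ∧ IsAlternating M (y :: z :: p) :=
  List.isChain_cons_cons

theorem IsAlternating.tail {x : V} {p : List V} (h : IsAlternating M (x :: p)) :
    IsAlternating M p := by
  match p with
  | [] | [_] => exact List.isChain_nil
  | _ :: _ :: _ => exact (isAlternating_cons_cons_cons.1 h).2

theorem SymMem.matched_left {x y : V} (h : SymMem M (x, y)) : Matched M x :=
  h.elim (fun h => ⟨_, h, Or.inl rfl⟩) fun h => ⟨_, h, Or.inr rfl⟩

theorem IsAlternating.getLast_mem_union {S N : Set V}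
    (hSN : ∀ x ∈ S, ∀ y, Adj T x y → y ∈ N) (hNS : ∀ y ∈ N, ∀ z, SymMem M (y, z) → z ∈ S)
    {x z : V} {p : List V} (hx : x ∈ S) (hfirst : ∀ y ∈ p.head?, ¬ SymMem M (x, y))
    (hchain : (x :: p).IsChain (Adj T)) (halt : IsAlternating M (x :: p))
    (hlast : (x :: p).getLast? = some z) : z ∈ S ∪ N := by
  match p with
  | [] => exact Or.inl (Option.some.inj hlast ▸ hx)
  | [y] => exact Or.inr (Option.some.inj hlast ▸ hSN x hx y (List.isChain_cons_cons.1 hchain).1)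
  | y :: w :: q =>
    obtain ⟨hxy, hchain'⟩ := List.isChain_cons_cons.1 hchain
    obtain ⟨hxyw, halt'⟩ := isAlternating_cons_cons_cons.1 halt
    have hyw : SymMem M (y, w) := by
      by_contra hyw
      exact hfirst y rfl (hxyw.2 hyw)
    have hfirst' : ∀ u ∈ q.head?, ¬ SymMem M (w, u) := by
      intro u hu
      obtain ⟨q', rfl⟩ := List.head?_eq_some_iff.1 hu
      exact (isAlternating_cons_cons_cons.1 halt').1.1 hyw
    exact getLast_mem_union hSN hNS (hNS y (hSN x hx y hxy) w hyw) hfirst'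
      (List.isChain_cons_cons.1 hchain').2 halt'.tail hlast

theorem IsAltTreeOn.subset_union_of_closed {r : V} {X : Finset V} {S N : Set V}
    (htree : IsAltTreeOn T M r X) (hr : r ∈ S) (hSN : ∀ x ∈ S, ∀ y, Adj T x y → y ∈ N)
    (hNS : ∀ y ∈ N, ∀ z, SymMem M (y, z) → z ∈ S) : ↑X ⊆ S ∪ N := by
  intro x hx
  obtain ⟨⟨-, hpaths⟩, hrX, hrM, -, halt, -⟩ := htree
  obtain ⟨p, hp, -⟩ := hpaths r hrX x hx
  have hpalt := halt x hx p hp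
  obtain ⟨hhead, hlast, -, hchain⟩ := hp
  obtain ⟨q, rfl⟩ := List.head?_eq_some_iff.1 hhead
  exact hpalt.getLast_mem_union hSN hNS hr (fun _ _ h => hrM h.matched_left) hchain hlast

end Alternating

section Bipartite

variable {A B S N : Finset V} {G M T : Finset (V × V)} {r : V}

theorem IsMatching.left_unique (hM : IsMatching M) {a a' b : V} (h : (a, b) ∈ M)
    (h' : (a', b) ∈ M) : a = a' := by
  by_contra hne
  exact (hM _ h _ h' fun heq => hne (congrArg Prod.fst heq)).2.2.2 rfl

theorem IsMatching.card_le_card (hM : IsMatching M) (hSN : ∀ a ∈ S, ∃ b ∈ N, (a, b) ∈ M) :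
    S.card ≤ N.card :=
  Finset.card_le_card_of_forall_subsingleton (fun a b => (a, b) ∈ M) hSN
    fun _ _ _ h _ h' => hM.left_unique h.2 h'.2

theorem notMem_snd_of_mem_left (hdisj : Disjoint A B) (hG : G ⊆ A ×ˢ B) {a x : V} (ha : a ∈ A) :
    (x, a) ∉ G :=
  fun h => Finset.disjoint_left.1 hdisj ha (Finset.mem_product.1 (hG h)).2

theorem notMem_fst_of_mem_right (hdisj : Disjoint A B) (hG : G ⊆ A ×ˢ B) {b x : V} (hb : b ∈ B) :
    (b, x) ∉ G :=
  fun h => Finset.disjoint_right.1 hdisj hb (Finset.mem_product.1 (hG h)).1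

theorem Matched.exists_right (hdisj : Disjoint A B) (hM : M ⊆ A ×ˢ B) {a : V} (ha : a ∈ A)
    (hmatched : Matched M a) : ∃ b, (a, b) ∈ M := by
  obtain ⟨⟨a', b⟩, he, rfl | rfl⟩ := hmatched
  · exact ⟨b, he⟩
  · exact absurd he (notMem_snd_of_mem_left hdisj hM ha)

theorem IsAltTreeOn.exists_partner (hdisj : Disjoint A B) (hM : M ⊆ A ×ˢ B)
    (htree : IsAltTreeOn T M r (A ∪ B)) (hSA : S ⊆ A) (hSN : ∀ e ∈ M, e.1 ∈ S → e.2 ∈ N) :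
    ∀ a ∈ S.erase r, ∃ b ∈ N, (a, b) ∈ M := by
  intro a ha
  obtain ⟨har, haS⟩ := Finset.mem_erase.1 ha
  have hmatched : Matched M a := htree.2.2.2.1 a (Finset.mem_union_left _ (hSA haS)) har
  obtain ⟨b, hab⟩ := hmatched.exists_right hdisj hM (hSA haS)
  exact ⟨b, hSN _ hab haS, hab⟩

theorem IsAltTreeOn.card_le_card_add_one (hdisj : Disjoint A B) (hM : M ⊆ A ×ˢ B)
    (hmatch : IsMatching M) (htree : IsAltTreeOn T M r (A ∪ B)) (hSA : S ⊆ A)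
    (hSN : ∀ e ∈ M, e.1 ∈ S → e.2 ∈ N) : S.card ≤ N.card + 1 :=
  calc
    S.card ≤ (S.erase r).card + 1 := Nat.sub_le_iff_le_add.1 Finset.pred_card_le_card_erase
    _ ≤ N.card + 1 :=
      Nat.add_le_add_right (hmatch.card_le_card (htree.exists_partner hdisj hM hSA hSN)) 1

theorem IsAltTreeOn.exists_leaving_matching_edge (hdisj : Disjoint A B) (hM : M ⊆ A ×ˢ B)
    (hT : T ⊆ A ×ˢ B) (htree : IsAltTreeOn T M r (A ∪ B)) (hr : r ∈ S) (hSA : S ⊂ A) (hNB : N ⊆ B)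
    (hSN : ∀ e ∈ T, e.1 ∈ S → e.2 ∈ N) : ∃ a ∉ S, ∃ b ∈ N, (a, b) ∈ M := by
  by_contra! hclosed
  have hTSN : ∀ x ∈ (S : Set V), ∀ y, Adj T x y → y ∈ (N : Set V) := by
    rintro x hx y (h | h)
    · exact hSN _ h hx
    · exact absurd h (notMem_snd_of_mem_left hdisj hT (hSA.1 hx))
  have hMNS : ∀ y ∈ (N : Set V), ∀ z, SymMem M (y, z) → z ∈ (S : Set V) := by
    rintro y hy z (h | h)
    · exact absurd h (notMem_fst_of_mem_right hdisj hM (hNB hy))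
    · by_contra hz
      exact hclosed z hz y hy h
  obtain ⟨a, haA, haS⟩ := Finset.exists_of_ssubset hSA
  rcases htree.subset_union_of_closed hr hTSN hMNS (Finset.mem_union_left B haA) with h | h
  · exact haS h
  · exact Finset.disjoint_left.1 hdisj haA (hNB h)

theorem IsAltTreeOn.card_le_card (hdisj : Disjoint A B) (hG : G ⊆ A ×ˢ B) (hM : M ⊆ G)
    (hT : T ⊆ G) (hmatch : IsMatching M) (htree : IsAltTreeOn T M r (A ∪ B)) (hSA : S ⊂ A)
    (hNB : N ⊆ B) (hSN : ∀ e ∈ G, e.1 ∈ S → e.2 ∈ N) : S.card ≤ N.card := by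
  have hpartner := htree.exists_partner hdisj (hM.trans hG) hSA.1 fun e he => hSN e (hM he)
  by_cases hr : r ∈ S
  · obtain ⟨a', ha', b', hb', hab'⟩ := htree.exists_leaving_matching_edge hdisj (hM.trans hG)
      (hT.trans hG) hr hSA hNB fun e he => hSN e (hT he)
    have hpartner' : ∀ a ∈ S.erase r, ∃ b ∈ N.erase b', (a, b) ∈ M := by
      intro a ha
      obtain ⟨b, hb, hab⟩ := hpartner a ha
      refine ⟨b, Finset.mem_erase.2 ⟨?_, hb⟩, hab⟩
      rintro rfl
      exact ha' (hmatch.left_unique hab hab' ▸ Finset.mem_of_mem_erase ha)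
    calc
      S.card = (S.erase r).card + 1 := (Finset.card_erase_add_one hr).symm
      _ ≤ (N.erase b').card + 1 := Nat.add_le_add_right (hmatch.card_le_card hpartner') 1
      _ = N.card := Finset.card_erase_add_one hb'
  · rw [Finset.erase_eq_of_notMem hr] at hpartner
    exact hmatch.card_le_card hpartner

end Bipartite

section Offers

variable {A B S N : Finset V} {E : Finset (V × V)} {v : V → V → ℝ → ℝ} {O O₁ O₂ : V → ℝ}

theorem Stable.le_right_of_le_left (hO₁ : Stable E v O₁) {e : V × V} (hv : Antitone (v e.2 e.1))
    (he : e ∈ EQg E v O₂) (hle : O₁ e.1 ≤ O₂ e.1) : O₂ e.2 ≤ O₁ e.2 := by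
  obtain ⟨heE, heq⟩ := Finset.mem_filter.1 he
  calc
    O₂ e.2 = v e.2 e.1 (O₂ e.1) := heq
    _ ≤ v e.2 e.1 (O₁ e.1) := hv hle
    _ ≤ O₁ e.2 := hO₁ e heE

theorem Stable.lt_right_of_lt_left (hO₁ : Stable E v O₁) {e : V × V} (hv : StrictAnti (v e.2 e.1))
    (he : e ∈ EQg E v O₂) (hlt : O₁ e.1 < O₂ e.1) : O₂ e.2 < O₁ e.2 := by
  obtain ⟨heE, heq⟩ := Finset.mem_filter.1 he
  calc
    O₂ e.2 = v e.2 e.1 (O₂ e.1) := heq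
    _ < v e.2 e.1 (O₁ e.1) := hv hlt
    _ ≤ O₁ e.2 := hO₁ e heE

theorem EQg_subset : EQg E v O ⊆ E := Finset.filter_subset _ _

theorem Stable.snd_mem_filter_lt (hO₁ : Stable E v O₁) (hE : E ⊆ A ×ˢ B)
    (hv : ∀ e ∈ E, StrictAnti (v e.2 e.1)) {e : V × V} (he : e ∈ EQg E v O₂)
    (hlt : O₁ e.1 < O₂ e.1) : e.2 ∈ B.filter fun b => O₂ b < O₁ b :=
  Finset.mem_filter.2 ⟨(Finset.mem_product.1 (hE (EQg_subset he))).2,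
    hO₁.lt_right_of_lt_left (hv e (EQg_subset he)) he hlt⟩

namespace SASTG

theorem card_le_card_add_one (hdisj : Disjoint A B) (hE : E ⊆ A ×ˢ B) (hO : SASTG A B E v O)
    (hSA : S ⊆ A) (hSN : ∀ e ∈ EQg E v O, e.1 ∈ S → e.2 ∈ N) : S.card ≤ N.card + 1 := by
  obtain ⟨-, M, T, r, hmatch, hM, -, -, htree⟩ := hO
  exact htree.card_le_card_add_one hdisj (hM.trans (EQg_subset.trans hE)) hmatch hSA
    fun e he => hSN e (hM he)

theorem card_le_card (hdisj : Disjoint A B) (hE : E ⊆ A ×ˢ B) (hO : SASTG A B E v O)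
    (hSA : S ⊂ A) (hNB : N ⊆ B) (hSN : ∀ e ∈ EQg E v O, e.1 ∈ S → e.2 ∈ N) :
    S.card ≤ N.card := by
  obtain ⟨-, M, T, r, hmatch, hM, -, hT, htree⟩ := hO
  exact htree.card_le_card hdisj (EQg_subset.trans hE) hM hT hmatch hSA hNB hSN

theorem forall_left_lt (hdisj : Disjoint A B) (hE : E ⊆ A ×ˢ B)
    (hv : ∀ e ∈ E, StrictAnti (v e.2 e.1)) (hcard : B.card < A.card) (h₁ : SASTG A B E v O₁)
    (h₂ : SASTG A B E v O₂) {i : V} (hi : i ∈ A) (hlt : O₁ i < O₂ i) :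
    ∀ a ∈ A, O₁ a < O₂ a := by
  set D := A.filter fun a => O₁ a < O₂ a
  set U := B.filter fun b => O₂ b < O₁ b
  have hDA : D ⊆ A := Finset.filter_subset _ _
  have hUB : U ⊆ B := Finset.filter_subset _ _
  have hDne : D.Nonempty := ⟨i, Finset.mem_filter.2 ⟨hi, hlt⟩⟩
  by_contra hnot
  have hDssub : D ⊂ A := hDA.ssubset_of_ne fun heq => hnot (Finset.filter_eq_self.1 heq)
  have hDU : D.card ≤ U.card := h₂.card_le_card hdisj hE hDssub hUB fun e he heD =>
    h₁.1.snd_mem_filter_lt hE hv he (Finset.mem_filter.1 heD).2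
  have hcompl : (A \ D).card ≤ (B \ U).card := by
    refine h₁.card_le_card hdisj hE (Finset.sdiff_ssubset hDA hDne) Finset.sdiff_subset ?_
    intro e he heD
    have heE : e ∈ E := EQg_subset he
    obtain ⟨he₁, he₂⟩ := Finset.mem_product.1 (hE heE)
    have hle : O₂ e.1 ≤ O₁ e.1 :=
      not_lt.1 fun h => (Finset.mem_sdiff.1 heD).2 (Finset.mem_filter.2 ⟨he₁, h⟩)
    have hle' : O₁ e.2 ≤ O₂ e.2 := h₂.1.le_right_of_le_left (hv e heE).antitone he hle
    exact Finset.mem_sdiff.2 ⟨he₂, fun h => hle'.not_gt (Finset.mem_filter.1 h).2⟩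
  have hA : (A \ D).card + D.card = A.card := Finset.card_sdiff_add_card_eq_card hDA
  have hB : (B \ U).card + U.card = B.card := Finset.card_sdiff_add_card_eq_card hUB
  omega

theorem forall_right_lt (hdisj : Disjoint A B) (hE : E ⊆ A ×ˢ B)
    (hv : ∀ e ∈ E, StrictAnti (v e.2 e.1)) (hcard : B.card < A.card) (h₁ : Stable E v O₁)
    (h₂ : SASTG A B E v O₂) (hlt : ∀ a ∈ A, O₁ a < O₂ a) : ∀ b ∈ B, O₂ b < O₁ b := by
  have hle : A.card ≤ (B.filter fun b => O₂ b < O₁ b).card + 1 :=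
    h₂.card_le_card_add_one hdisj hE Finset.Subset.rfl fun e he heA =>
      h₁.snd_mem_filter_lt hE hv he (hlt e.1 heA)
  exact Finset.filter_eq_self.1
    (Finset.eq_of_subset_of_card_le (Finset.filter_subset _ _) (by omega))

end SASTG

theorem sastg_strict_monotone_general (hdisj : Disjoint A B) (hE : E ⊆ A ×ˢ B)
    (hv : ∀ e ∈ E, StrictAnti (v e.2 e.1)) (hcard : B.card < A.card) (h₁ : SASTG A B E v O₁)
    (h₂ : SASTG A B E v O₂) {i : V} (hi : i ∈ A) (hlt : O₁ i < O₂ i) :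
    (∀ a ∈ A, O₁ a < O₂ a) ∧ (∀ b ∈ B, O₂ b < O₁ b) :=
  have hleft := h₁.forall_left_lt hdisj hE hv hcard h₂ hi hlt
  ⟨hleft, h₂.forall_right_lt hdisj hE hv hcard h₁.1 hleft⟩

end Offers

/-- strict monotonicity of stable alternating spanning tree generating
offer profiles in the offer of a fixed node `i ∈ A` (Lemma 5 of the paper). -/
theorem sastg_strict_monotone [Fintype V] [DecidableEq V]
    (A B : Finset V) (E : Finset (V × V))
    (hdisj : Disjoint A B) (hA : A.Nonempty) (hB : B.Nonempty)
    (hE : E ⊆ A ×ˢ B)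
    (hconn : ∀ x ∈ A ∪ B, ∀ y ∈ A ∪ B, ∃ p : List V, IsPath E p x y)
    (v : V → V → ℝ → ℝ)
    (hvC : ∀ e ∈ E, Continuous (v e.2 e.1) ∧ Continuous (v e.1 e.2))
    (hvA : ∀ e ∈ E, StrictAnti (v e.2 e.1) ∧ StrictAnti (v e.1 e.2))
    (hvInv : ∀ e ∈ E, (∀ x, v e.1 e.2 (v e.2 e.1 x) = x) ∧ (∀ x, v e.2 e.1 (v e.1 e.2 x) = x))
    (hcard : A.card = B.card + 1)
    (i : V) (hi : i ∈ A) (c : ℝ)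
    (hex : ∀ o ≤ c, ∃ O : V → ℝ, SASTG A B E v O ∧ O i = o)
    (O1 O2 : V → ℝ) (h1 : SASTG A B E v O1) (h2 : SASTG A B E v O2)
    (hc1 : O1 i ≤ c) (hc2 : O2 i ≤ c) (hlt : O1 i < O2 i) :
    (∀ i' ∈ A, O1 i' < O2 i') ∧ (∀ j' ∈ B, O2 j' < O1 j') :=
  sastg_strict_monotone_general hdisj hE (fun e he => (hvA e he).1) (by omega) h1 h2 hi hlt

end GSM
end

section
/- Assume |A| − |B| = 1 and assume there exists a stable alternating spanning tree generating offer profile O. Then for every i ∈ A and every o_i ≤ O_i, there exists a stable alternating spanning tree generating offer profile O* with O*_i = o_i. -/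
open Classical

variable {V : Type*}

namespace GSM

/-!
Regard `B` as goods with prices `O b` and `A` as buyers. Accepting the price of `b` leaves `a` with
a payoff that decreases in the price, so it has a cost for `a` that increases with it. A stable
offer profile gives every buyer at least the payoff left by a cheapest good, and the equality
subgraph joins the buyers to the goods for which this is an equality. It contains a near-perfect
matching with an alternating spanning tree if and only if every nonempty `S ⊆ B` has more than `|S|`
neighbours. Hence it suffices to find prices whose demand graph has this surplus and at which the
least cost of the buyer `i` is a given number that is larger than before.

Such prices are found by maximality. Among the prices at which the other buyers alone have surplus
on the goods that `i` cannot get for the target cost, take maximal ones. If surplus failed there, a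
minimal overdemanded set of the other buyers would form, with the goods they demand, a smaller
market with surplus. By induction the cost of a buyer in this market can be raised slightly, and a
comparison principle shows that the prices then go up and move only slightly, so that no buyer
starts to demand a further good. This contradicts maximality.
-/

section Surplus

variable {α β : Type*} {G : Finset (α × β)} {A : Finset α} {B S : Finset β}

/-- The neighbours in `α` of a set of nodes `S ⊆ β` in the bipartite graph `G`. -/
noncomputable def leftNbrs (G : Finset (α × β)) (S : Finset β) : Finset α :=
  (G.filter fun e => e.2 ∈ S).image Prod.fst

/-- The neighbours in `β` of a set of nodes `W ⊆ α` in the bipartite graph `G`. -/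
noncomputable def rightNbrs (G : Finset (α × β)) (W : Finset α) : Finset β :=
  (G.filter fun e => e.1 ∈ W).image Prod.snd

/-- The strict Hall condition: every nonempty subset of `B` has more neighbours than elements. -/
def PositiveSurplus (G : Finset (α × β)) (B : Finset β) : Prop :=
  ∀ S ⊆ B, S.Nonempty → S.card < (leftNbrs G S).card

lemma mem_leftNbrs {a : α} : a ∈ leftNbrs G S ↔ ∃ b ∈ S, (a, b) ∈ G := by
  simp [leftNbrs, and_comm]

lemma mem_rightNbrs {W : Finset α} {b : β} : b ∈ rightNbrs G W ↔ ∃ a ∈ W, (a, b) ∈ G := by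
  simp [rightNbrs, and_comm]

lemma leftNbrs_mono {G' : Finset (α × β)} {S' : Finset β} (hG : G ⊆ G') (hS : S ⊆ S') :
    leftNbrs G S ⊆ leftNbrs G' S' := by
  intro a ha
  obtain ⟨b, hb, hab⟩ := mem_leftNbrs.1 ha
  exact mem_leftNbrs.2 ⟨b, hS hb, hG hab⟩

lemma rightNbrs_mono {G' : Finset (α × β)} {W W' : Finset α} (hG : G ⊆ G') (hW : W ⊆ W') :
    rightNbrs G W ⊆ rightNbrs G' W' := by
  intro b hb
  obtain ⟨a, ha, hab⟩ := mem_rightNbrs.1 hb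
  exact mem_rightNbrs.2 ⟨a, hW ha, hG hab⟩

lemma leftNbrs_subset (hG : G ⊆ A ×ˢ B) : leftNbrs G S ⊆ A := by
  intro a ha
  obtain ⟨b, -, hab⟩ := mem_leftNbrs.1 ha
  exact (Finset.mem_product.1 (hG hab)).1

lemma rightNbrs_subset {W : Finset α} (hG : G ⊆ A ×ˢ B) : rightNbrs G W ⊆ B := by
  intro b hb
  obtain ⟨a, -, hab⟩ := mem_rightNbrs.1 hb
  exact (Finset.mem_product.1 (hG hab)).2

namespace PositiveSurplus

lemma mono {G' : Finset (α × β)} {B' : Finset β} (h : PositiveSurplus G B) (hG : G ⊆ G')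
    (hB : B' ⊆ B) : PositiveSurplus G' B' := fun S hS hne =>
  (h S (hS.trans hB) hne).trans_le (Finset.card_le_card (leftNbrs_mono hG Finset.Subset.rfl))

lemma card_le (h : PositiveSurplus G B) (hS : S ⊆ B) : S.card ≤ (leftNbrs G S).card := by
  rcases S.eq_empty_or_nonempty with rfl | hne
  · simp
  · exact (h S hS hne).le

lemma union {G₁ G₂ : Finset (α × β)} {S₁ S₂ : Finset β} (h₁ : PositiveSurplus G₁ S₁)
    (h₂ : PositiveSurplus G₂ S₂) (hdisj : ∀ e₁ ∈ G₁, ∀ e₂ ∈ G₂, e₁.1 ≠ e₂.1) :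
    PositiveSurplus (G₁ ∪ G₂) (S₁ ∪ S₂) := by
  intro S hS hne
  have hS_eq : S = S ∩ S₁ ∪ S ∩ S₂ := by
    rw [← Finset.inter_union_distrib_left, Finset.inter_eq_left.2 hS]
  have hcard : S.card ≤ (S ∩ S₁).card + (S ∩ S₂).card :=
    (congrArg Finset.card hS_eq).trans_le (Finset.card_union_le _ _)
  have hnbrs : (leftNbrs G₁ (S ∩ S₁)).card + (leftNbrs G₂ (S ∩ S₂)).card ≤
      (leftNbrs (G₁ ∪ G₂) S).card := by
    rw [← Finset.card_union_of_disjoint]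
    · exact Finset.card_le_card (Finset.union_subset
        (leftNbrs_mono Finset.subset_union_left Finset.inter_subset_left)
        (leftNbrs_mono Finset.subset_union_right Finset.inter_subset_left))
    · refine Finset.disjoint_left.2 fun a ha₁ ha₂ => ?_
      obtain ⟨b₁, -, hab₁⟩ := mem_leftNbrs.1 ha₁
      obtain ⟨b₂, -, hab₂⟩ := mem_leftNbrs.1 ha₂
      exact hdisj _ hab₁ _ hab₂ rfl
  have hle₁ := h₁.card_le (S := S ∩ S₁) Finset.inter_subset_right
  have hle₂ := h₂.card_le (S := S ∩ S₂) Finset.inter_subset_right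
  rcases Finset.union_nonempty.1 (hS_eq ▸ hne) with hne₁ | hne₂
  · have := h₁ _ Finset.inter_subset_right hne₁
    omega
  · have := h₂ _ Finset.inter_subset_right hne₂
    omega

lemma card_le_card_rightNbrs (h : PositiveSurplus G B) (hG : G ⊆ A ×ˢ B)
    (hcard : A.card = B.card + 1) {W : Finset α} (hW : W ⊂ A) :
    W.card ≤ (rightNbrs G W).card := by
  have hWA := Finset.card_lt_card hW
  have hsub : rightNbrs G W ⊆ B := rightNbrs_subset hG
  have hsdiff := Finset.card_sdiff_add_card_eq_card hsub
  rcases (B \ rightNbrs G W).eq_empty_or_nonempty with hempty | hne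
  · rw [hempty, Finset.card_empty] at hsdiff
    omega
  · have hlt := h _ Finset.sdiff_subset hne
    have hnbrs : leftNbrs G (B \ rightNbrs G W) ⊆ A \ W := by
      intro a ha
      obtain ⟨b, hb, hab⟩ := mem_leftNbrs.1 ha
      exact Finset.mem_sdiff.2 ⟨leftNbrs_subset hG ha, fun haW =>
        (Finset.mem_sdiff.1 hb).2 (mem_rightNbrs.2 ⟨a, haW, hab⟩)⟩
    have := Finset.card_le_card hnbrs
    have := Finset.card_sdiff_add_card_eq_card hW.subset
    omega

lemma exists_mem_of_card_lt (h : PositiveSurplus G B) (hG : G ⊆ A ×ˢ B)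
    (hcard : A.card = B.card + 1) {W : Finset α} (hW : W ⊂ A) (hSW : S.card < W.card) :
    ∃ a ∈ W, ∃ b, (a, b) ∈ G ∧ b ∉ S := by
  obtain ⟨b, hb, hbS⟩ := Finset.exists_mem_notMem_of_card_lt_card
    (hSW.trans_le (h.card_le_card_rightNbrs hG hcard hW))
  obtain ⟨a, ha, hab⟩ := mem_rightNbrs.1 hb
  exact ⟨a, ha, b, hab, hbS⟩

lemma exists_mem (h : PositiveSurplus G B) (hG : G ⊆ A ×ˢ B) (hcard : A.card = B.card + 1)
    (hB : B.Nonempty) {a : α} (ha : a ∈ A) : ∃ b, (a, b) ∈ G := by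
  have hW : {a} ⊂ A := Finset.ssubset_iff_subset_ne.2 ⟨Finset.singleton_subset_iff.2 ha, by
    rintro rfl
    simp [hB.ne_empty] at hcard⟩
  obtain ⟨_, ha', b, hab, -⟩ := h.exists_mem_of_card_lt (S := ∅) hG hcard hW (by simp)
  exact ⟨b, Finset.mem_singleton.1 ha' ▸ hab⟩

/-- A set that is not contained in `U` has `i` as a neighbour, so its set of non-neighbours is
subject to `hdual`. -/
lemma of_dual_hall {U : Finset β} {i : α} (hG : G ⊆ A ×ˢ B) (hcard : A.card = B.card + 1)
    (hU : PositiveSurplus G U) (hUi : ∀ b ∈ B, b ∉ U → (i, b) ∈ G)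
    (hdual : ∀ W ⊆ A.erase i, W.card ≤ (rightNbrs G W).card) : PositiveSurplus G B := by
  intro S hS hne
  by_cases hSU : S ⊆ U
  · exact hU S hSU hne
  obtain ⟨b, hbS, hbU⟩ := Finset.not_subset.1 hSU
  have hiS : i ∈ leftNbrs G S := mem_leftNbrs.2 ⟨b, hbS, hUi b (hS hbS) hbU⟩
  have hnbrs : rightNbrs G (A \ leftNbrs G S) ⊆ B \ S := by
    intro b hb
    obtain ⟨a, ha, hab⟩ := mem_rightNbrs.1 hb
    exact Finset.mem_sdiff.2 ⟨rightNbrs_subset hG hb, fun hbS =>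
      (Finset.mem_sdiff.1 ha).2 (mem_leftNbrs.2 ⟨b, hbS, hab⟩)⟩
  have hle := (hdual (A \ leftNbrs G S) fun a ha => Finset.mem_erase.2
    ⟨fun hai => (Finset.mem_sdiff.1 ha).2 (hai ▸ hiS), (Finset.mem_sdiff.1 ha).1⟩).trans
    (Finset.card_le_card hnbrs)
  have := Finset.card_sdiff_add_card_eq_card (leftNbrs_subset (S := S) hG)
  have := Finset.card_sdiff_add_card_eq_card hS
  omega

end PositiveSurplus

/-- Take for `T` a minimal set with fewer neighbours than elements. -/
lemma exists_overdemanded {W : Finset α} (hW : (rightNbrs G W).card < W.card) :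
    ∃ T ⊆ W, T.card = (rightNbrs G T).card + 1 ∧
      PositiveSurplus (G.filter fun e => e.1 ∈ T) (rightNbrs G T) := by
  obtain ⟨T, hTW, hT⟩ :=
    exists_minimal_le_of_wellFoundedLT (fun W => (rightNbrs G W).card < W.card) W hW
  have hmin : ∀ T' ⊂ T, T'.card ≤ (rightNbrs G T').card := fun T' hT' =>
    not_lt.1 (hT.not_prop_of_lt hT')
  refine ⟨T, hTW, ?_, fun S hS hne => ?_⟩
  · obtain ⟨a, ha⟩ : T.Nonempty := Finset.card_pos.1 (by have := hT.prop; omega)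
    have := hmin _ (Finset.erase_ssubset ha)
    have := Finset.card_le_card
      (rightNbrs_mono (Finset.Subset.refl G) (Finset.erase_subset a T))
    have := Finset.card_erase_add_one ha
    have := hT.prop
    omega
  · set N := leftNbrs (G.filter fun e => e.1 ∈ T) S
    have hNT : N ⊆ T := by
      intro a ha
      obtain ⟨b, -, hab⟩ := mem_leftNbrs.1 ha
      exact (Finset.mem_filter.1 hab).2
    have hNne : N.Nonempty := by
      obtain ⟨b, hb⟩ := hne
      obtain ⟨a, ha, hab⟩ := mem_rightNbrs.1 (hS hb)
      exact ⟨a, mem_leftNbrs.2 ⟨b, hb, Finset.mem_filter.2 ⟨hab, ha⟩⟩⟩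
    have hnbrs : rightNbrs G (T \ N) ⊆ rightNbrs G T \ S := by
      intro b hb
      obtain ⟨a, ha, hab⟩ := mem_rightNbrs.1 hb
      obtain ⟨haT, haN⟩ := Finset.mem_sdiff.1 ha
      exact Finset.mem_sdiff.2 ⟨mem_rightNbrs.2 ⟨a, haT, hab⟩, fun hbS =>
        haN (mem_leftNbrs.2 ⟨b, hbS, Finset.mem_filter.2 ⟨hab, haT⟩⟩)⟩
    have := (hmin _ (Finset.sdiff_ssubset hNT hNne)).trans (Finset.card_le_card hnbrs)
    have := Finset.card_sdiff_add_card_eq_card hNT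
    have := Finset.card_sdiff_add_card_eq_card hS
    have := hT.prop
    omega

end Surplus

section Trees

variable {A B X : Finset V} {T M : Finset (V × V)} {r x y : V} {p l : List V}

/-- The simple graph on the node set `V` whose edges are the elements of `T` that are not loops. -/
def toSimpleGraph (T : Finset (V × V)) : SimpleGraph V := SimpleGraph.fromRel fun x y => (x, y) ∈ T

lemma toSimpleGraph_adj (hT : ∀ e ∈ T, e.1 ≠ e.2) : (toSimpleGraph T).Adj x y ↔ Adj T x y :=
  (SimpleGraph.fromRel_adj _ _ _).trans (and_iff_right_of_imp
    (Or.rec (hT _) fun h => (hT _ h).symm))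

lemma isPath_iff_exists_walk (hT : ∀ e ∈ T, e.1 ≠ e.2) :
    IsPath T p x y ↔ ∃ w : (toSimpleGraph T).Walk x y, w.IsPath ∧ w.support = p := by
  have hadj : (toSimpleGraph T).Adj = Adj T := by
    ext x y
    exact toSimpleGraph_adj hT
  constructor
  · rintro ⟨hhead, hlast, hnodup, hchain⟩
    have hne : p ≠ [] := by
      rintro rfl
      simp at hhead
    obtain rfl : p.head hne = x := Option.some_injective _ (List.head?_eq_some_head hne ▸ hhead)
    obtain rfl : p.getLast hne = y :=
      Option.some_injective _ (List.getLast?_eq_some_getLast hne ▸ hlast)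
    exact ⟨.ofSupport p hne (hadj ▸ hchain),
      (SimpleGraph.Walk.isPath_def _).2 (by simpa using hnodup), by simp⟩
  · rintro ⟨w, hw, rfl⟩
    refine ⟨?_, ?_, (SimpleGraph.Walk.isPath_def _).1 hw, hadj ▸ w.isChain_adj_support⟩
    · rw [List.head?_eq_some_head w.support_ne_nil, w.head_support]
    · rw [List.getLast?_eq_some_getLast w.support_ne_nil, w.getLast_support]

lemma isTreeOn_of_isAcyclic (hT : ∀ e ∈ T, e.1 ≠ e.2) (hX : ∀ e ∈ T, e.1 ∈ X ∧ e.2 ∈ X)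
    (hacyclic : (toSimpleGraph T).IsAcyclic) (hr : ∀ x ∈ X, (toSimpleGraph T).Reachable r x) :
    IsTreeOn T X := by
  refine ⟨hX, fun x hx y hy => ?_⟩
  obtain ⟨w, hw⟩ := ((hr x hx).symm.trans (hr y hy)).exists_isPath
  refine ⟨w.support, (isPath_iff_exists_walk hT).2 ⟨w, hw, rfl⟩, fun p hp => ?_⟩
  obtain ⟨w', hw', rfl⟩ := (isPath_iff_exists_walk hT).1 hp
  rw [Subtype.mk.inj ((hacyclic.subsingleton_path x y).elim ⟨w', hw'⟩ ⟨w, hw⟩)]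

/-- At a vertex of maximal rank on a cycle both neighbours would have to be its parent. -/
lemma isAcyclic_of_parent {H : SimpleGraph V} {parent : V → V} {rank : V → ℕ}
    (h : ∀ x y, H.Adj x y → parent x = y ∧ rank y < rank x ∨ parent y = x ∧ rank x < rank y) :
    H.IsAcyclic := by
  intro v c hc
  obtain ⟨u, hu, hmax⟩ := c.support.toFinset.exists_max_image rank ⟨v, by simp⟩
  have hu : u ∈ c.support := List.mem_toFinset.1 hu
  have hparent : ∀ {x}, H.Adj u x → x ∈ (c.rotate u hu).support → parent u = x := by
    intro x hux hx
    have hle := hmax x (List.mem_toFinset.2 ((SimpleGraph.Walk.mem_support_rotate_iff c u hu).1 hx))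
    exact (h u x hux).elim And.left fun hlt => absurd hlt.2 hle.not_gt
  have hc' := hc.rotate hu
  exact hc'.snd_ne_penultimate <|
    (hparent (SimpleGraph.Walk.adj_snd hc'.not_nil)
      (SimpleGraph.Walk.getVert_mem_support _ _)).symm.trans
    (hparent (SimpleGraph.Walk.adj_penultimate hc'.not_nil).symm
      (SimpleGraph.Walk.getVert_mem_support _ _))

lemma notMem_of_mem_fst (hdisj : Disjoint A B) (hT : T ⊆ A ×ˢ B) (h : (x, y) ∈ T) : x ∉ B :=
  Finset.disjoint_left.1 hdisj (Finset.mem_product.1 (hT h)).1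

lemma fst_ne_snd_of_subset_product (hdisj : Disjoint A B) (hT : T ⊆ A ×ˢ B) :
    ∀ e ∈ T, e.1 ≠ e.2 := fun _ he =>
  (Finset.disjoint_iff_ne.1 hdisj _ (Finset.mem_product.1 (hT he)).1 _
    (Finset.mem_product.1 (hT he)).2)

lemma Adj.symm (h : Adj T x y) : Adj T y x := Or.symm h

lemma Adj.mem_iff_notMem (hdisj : Disjoint A B) (hT : T ⊆ A ×ˢ B) (h : Adj T x y) :
    x ∈ B ↔ y ∉ B := by
  obtain h | h := h
  · exact iff_of_false (notMem_of_mem_fst hdisj hT h)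
      (not_not_intro (Finset.mem_product.1 (hT h)).2)
  · exact iff_of_true (Finset.mem_product.1 (hT h)).2 (notMem_of_mem_fst hdisj hT h)

lemma even_length_walk_iff (hdisj : Disjoint A B) (hT : T ⊆ A ×ˢ B)
    (w : (toSimpleGraph T).Walk x y) : Even w.length ↔ (x ∈ B ↔ y ∈ B) := by
  induction w with
  | nil => simp
  | cons h w ih =>
    have hmem := ((toSimpleGraph_adj (fst_ne_snd_of_subset_product hdisj hT)).1 h).mem_iff_notMem
      hdisj hT
    rw [SimpleGraph.Walk.length_cons, Nat.even_add_one, ih, hmem]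
    tauto

lemma isAlternating_cons_cons_iff (hdisj : Disjoint A B) (hT : T ⊆ A ×ˢ B)
    (hp : (x :: y :: l).IsChain (Adj T)) (hxy : SymMem M (x, y) ↔ x ∈ B) :
    IsAlternating M (x :: y :: l) ↔ (x :: y :: l).IsChain fun x y => SymMem M (x, y) ↔ x ∈ B := by
  induction l generalizing x y with
  | nil => exact iff_of_true (List.isChain_singleton _) (List.isChain_pair.2 hxy)
  | cons z l ih =>
    obtain ⟨hadj, hp⟩ := List.isChain_cons_cons.1 hp
    have hmem := hadj.mem_iff_notMem hdisj hT
    have hstep : IsAlternating M (x :: y :: z :: l) ↔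
        (SymMem M (x, y) ↔ ¬ SymMem M (y, z)) ∧ IsAlternating M (y :: z :: l) :=
      List.isChain_cons_cons
    rw [hstep, List.isChain_cons_cons, and_iff_right hxy, hxy, hmem]
    constructor
    · rintro ⟨hyz, h⟩
      exact (ih hp (not_iff_not.1 hyz.symm)).1 h
    · intro h
      have hyz := (List.isChain_cons_cons.1 h).1
      exact ⟨not_congr hyz.symm, (ih hp hyz).2 h⟩

lemma IsPath.isAlternating_iff (hdisj : Disjoint A B) (hT : T ⊆ A ×ˢ B) (hr : r ∈ A)
    (hrM : ¬ Matched M r) (hp : IsPath T p r x) :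
    IsAlternating M p ↔ p.IsChain fun x y => SymMem M (x, y) ↔ x ∈ B := by
  obtain ⟨hhead, -, -, hchain⟩ := hp
  rcases p with _ | ⟨_, _ | ⟨y, l⟩⟩
  · exact iff_of_true List.isChain_nil List.isChain_nil
  · exact iff_of_true List.isChain_nil (List.isChain_singleton _)
  · obtain rfl := Option.some_injective _ hhead
    refine isAlternating_cons_cons_iff hdisj hT hchain (iff_of_false ?_ ?_)
    · rintro (h | h)
      exacts [hrM ⟨_, h, Or.inl rfl⟩, hrM ⟨_, h, Or.inr rfl⟩]
    · exact Finset.disjoint_left.1 hdisj hr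

end Trees

section SurplusOfTree

variable {A B S : Finset V} {G T M : Finset (V × V)} {r a a' b b' : V}
  {p : List V}

lemma IsMatching.fst_eq (hM : IsMatching M) (h : (a, b) ∈ M) (h' : (a', b) ∈ M) : a = a' :=
  by_contra fun hne => (hM _ h _ h' fun heq => hne (congrArg Prod.fst heq)).2.2.2 rfl

lemma IsMatching.snd_eq (hM : IsMatching M) (h : (a, b) ∈ M) (h' : (a, b') ∈ M) : b = b' :=
  by_contra fun hne => (hM _ h _ h' fun heq => hne (congrArg Prod.snd heq)).1 rfl

lemma exists_mem_of_matched_fst (hdisj : Disjoint A B) (hM : M ⊆ A ×ˢ B) (ha : a ∈ A)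
    (h : Matched M a) : ∃ b ∈ B, (a, b) ∈ M := by
  obtain ⟨⟨a', b⟩, hmem, rfl | rfl⟩ := h
  · exact ⟨b, (Finset.mem_product.1 (hM hmem)).2, hmem⟩
  · exact absurd (Finset.mem_product.1 (hM hmem)).2 (Finset.disjoint_left.1 hdisj ha)

lemma exists_mem_of_matched_snd (hdisj : Disjoint A B) (hM : M ⊆ A ×ˢ B) (hb : b ∈ B)
    (h : Matched M b) : ∃ a, (a, b) ∈ M := by
  obtain ⟨⟨a, b'⟩, hmem, rfl | rfl⟩ := h
  · exact absurd hb (Finset.disjoint_left.1 hdisj (Finset.mem_product.1 (hM hmem)).1)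
  · exact ⟨a, hmem⟩

lemma IsMatching.exists_not_matched (hM : IsMatching M) (hdisj : Disjoint A B) (hMAB : M ⊆ A ×ˢ B)
    (hcard : B.card < A.card) : ∃ a ∈ A, ¬ Matched M a := by
  by_contra! hmatched
  choose! partner hpartner using fun a ha =>
    exists_mem_of_matched_fst hdisj hMAB ha (hmatched a ha)
  obtain ⟨a, ha, a', ha', hne, heq⟩ := Finset.exists_ne_map_eq_of_card_lt_of_maps_to hcard
    (f := partner) fun a ha => (hpartner a ha).1
  exact hne (hM.fst_eq (hpartner a ha).2 (heq ▸ (hpartner a' ha').2))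

lemma IsMatching.card_le_card_leftNbrs (hM : IsMatching M) (hS : ∀ b ∈ S, ∃ a, (a, b) ∈ M) :
    S.card ≤ (leftNbrs M S).card := by
  choose! partner hpartner using hS
  refine Finset.card_le_card_of_injOn partner
    (fun b hb => mem_leftNbrs.2 ⟨b, hb, hpartner b hb⟩) fun b hb b' hb' heq => ?_
  exact hM.snd_eq (hpartner b hb) (heq ▸ hpartner b' hb')

/-- The path can enter `S` only from the neighbourhood of `S`, and that only along a matching edge,
hence from `S`. -/
lemma notMem_of_isChain (hdisj : Disjoint A B) (hG : G ⊆ A ×ˢ B) (hM : IsMatching M) (hMG : M ⊆ G)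
    (hS : S ⊆ B) (hnbrs : leftNbrs M S = leftNbrs G S) (hr : r ∈ A) (hrM : ¬ Matched M r)
    (hhead : p.head? = some r)
    (hp : p.IsChain fun x y => Adj G x y ∧ (SymMem M (x, y) ↔ x ∈ B)) :
    ∀ x ∈ p, x ∉ S ∧ x ∉ leftNbrs G S := by
  have hnotMem : ∀ {x}, x ∈ A → x ∉ B := fun h => Finset.disjoint_left.1 hdisj h
  refine hp.induction _ p ?_ fun hne => ?_
  · rintro x y ⟨hxy, hstep⟩ ⟨hxS, hxN⟩
    by_cases hx : x ∈ B
    · have hyx : (y, x) ∈ M := (hstep.2 hx).resolve_left fun h =>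
        hnotMem (Finset.mem_product.1 (hG (hMG h))).1 hx
      have hyA := (Finset.mem_product.1 (hG (hMG hyx))).1
      refine ⟨fun hyS => hnotMem hyA (hS hyS), fun hyN => hxS ?_⟩
      obtain ⟨b, hb, hyb⟩ := mem_leftNbrs.1 (hnbrs ▸ hyN)
      exact hM.snd_eq hyx hyb ▸ hb
    · have hxy : (x, y) ∈ G := hxy.resolve_right fun h => hx (Finset.mem_product.1 (hG h)).2
      exact ⟨fun hyS => hxN (mem_leftNbrs.2 ⟨y, hyS, hxy⟩), fun hyN =>
        hnotMem (leftNbrs_subset hG hyN) (Finset.mem_product.1 (hG hxy)).2⟩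
  · obtain rfl : p.head hne = r := Option.some_injective _ (List.head?_eq_some_head hne ▸ hhead)
    refine ⟨fun h => hnotMem hr (hS h), fun h => ?_⟩
    obtain ⟨b, -, hrb⟩ := mem_leftNbrs.1 (hnbrs ▸ h)
    exact hrM ⟨_, hrb, Or.inl rfl⟩

theorem positiveSurplus_of_isAltTreeOn (hdisj : Disjoint A B) (hG : G ⊆ A ×ˢ B)
    (hcard : B.card < A.card) (hM : IsMatching M) (hMG : M ⊆ G) (hTG : T ⊆ G)
    (htree : IsAltTreeOn T M r (A ∪ B)) : PositiveSurplus G B := by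
  obtain ⟨⟨-, hpath⟩, hrAB, hrM, hmatched, halt, -⟩ := htree
  have hr : r ∈ A := by
    obtain ⟨a, ha, hunmatched⟩ := hM.exists_not_matched hdisj (hMG.trans hG) hcard
    by_contra hr
    exact hunmatched (hmatched a (Finset.mem_union_left _ ha) fun h => hr (h ▸ ha))
  intro S hSB hS
  by_contra! hle
  have hnbrs : leftNbrs M S = leftNbrs G S := by
    refine Finset.eq_of_subset_of_card_le (leftNbrs_mono hMG Finset.Subset.rfl)
      (hle.trans (hM.card_le_card_leftNbrs fun b hb => ?_))
    refine exists_mem_of_matched_snd hdisj (hMG.trans hG) (hSB hb)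
      (hmatched b (Finset.mem_union_right _ (hSB hb)) ?_)
    rintro rfl
    exact Finset.disjoint_left.1 hdisj hr (hSB hb)
  obtain ⟨b, hb⟩ := hS
  have hbAB := Finset.mem_union_right A (hSB hb)
  obtain ⟨p, hp, -⟩ := hpath r hrAB b hbAB
  have hchain := (hp.isAlternating_iff hdisj (hTG.trans hG) hr hrM).1 (halt b hbAB p hp)
  obtain ⟨hhead, hlast, -, hadj⟩ := hp
  refine (notMem_of_isChain hdisj hG hM hMG hSB hnbrs hr hrM hhead ?_ b
    (List.mem_of_getLast? hlast)).1 hb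
  exact List.isChain_iff_getElem.2 fun n hn =>
    ⟨(List.IsChain.getElem hadj n hn).imp (@hTG _) (@hTG _), hchain.getElem n hn⟩

end SurplusOfTree

section TreeOfSurplus

lemma PositiveSurplus.exists_injOn {α β : Type*} [Nonempty α] {G : Finset (α × β)} {B : Finset β}
    (h : PositiveSurplus G B) : ∃ f : β → α, Set.InjOn f B ∧ ∀ b ∈ B, (f b, b) ∈ G := by
  have hall : ∀ s : Finset B, s.card ≤ (s.biUnion fun b => leftNbrs G {b.1}).card := by
    intro s
    have hnbrs : leftNbrs G (s.map (Function.Embedding.subtype _)) ⊆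
        s.biUnion fun b => leftNbrs G {b.1} := by
      intro a ha
      obtain ⟨b, hb, hab⟩ := mem_leftNbrs.1 ha
      obtain ⟨b, hbs, rfl⟩ := Finset.mem_map.1 hb
      exact Finset.mem_biUnion.2 ⟨b, hbs, mem_leftNbrs.2 ⟨b, Finset.mem_singleton_self _, hab⟩⟩
    rw [← Finset.card_map (Function.Embedding.subtype _)]
    exact (h.card_le fun b hb => Finset.property_of_mem_map_subtype s hb).trans
      (Finset.card_le_card hnbrs)
  obtain ⟨f, hinj, hf⟩ := (Finset.all_card_le_biUnion_card_iff_exists_injective _).1 hall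
  refine ⟨fun b => if hb : b ∈ B then f ⟨b, hb⟩ else Classical.arbitrary α, ?_, fun b hb => ?_⟩
  · intro b hb b' hb' heq
    simp only [Finset.mem_coe.1 hb, Finset.mem_coe.1 hb', dif_pos] at heq
    exact congrArg Subtype.val (hinj heq)
  · simpa [hb, mem_leftNbrs] using hf ⟨b, hb⟩

/-- A maximal subset of `B` that can be ranked is all of `B`, since otherwise an element entered
from it could be added with a larger rank. -/
lemma exists_rank {β : Type*} {B : Finset β} {base : β → Prop} {R : β → β → Prop}
    (h : ∀ U ⊆ B, U.Nonempty → ∃ b ∈ U, base b ∨ ∃ b' ∈ B \ U, R b' b) :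
    ∃ d : β → ℕ, ∀ b ∈ B, base b ∨ ∃ b' ∈ B, R b' b ∧ d b' < d b := by
  obtain ⟨C, hC⟩ := (B.powerset.filter fun C => ∃ d : β → ℕ, ∀ b ∈ C,
    base b ∨ ∃ b' ∈ C, R b' b ∧ d b' < d b).exists_maximal ⟨∅, by simp⟩
  simp only [Finset.mem_filter, Finset.mem_powerset] at hC
  obtain ⟨hCB, d, hd⟩ := hC.prop
  obtain rfl | hssub := hCB.eq_or_ssubset
  · exact ⟨d, hd⟩
  obtain ⟨b, hb, hentry⟩ := h (B \ C) Finset.sdiff_subset (Finset.sdiff_nonempty.2 hssub.2)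
  rw [sdiff_sdiff_eq_self hCB] at hentry
  obtain ⟨hbB, hbC⟩ := Finset.mem_sdiff.1 hb
  have hold : ∀ b' ∈ C, Function.update d b (C.sup d + 1) b' = d b' := fun b' hb' =>
    Function.update_of_ne (ne_of_mem_of_not_mem hb' hbC) _ _
  have hgrow : insert b C ≤ C := hC.2 ⟨Finset.insert_subset hbB hCB,
    Function.update d b (C.sup d + 1), fun x hx => ?_⟩ (Finset.subset_insert b C)
  · exact absurd (hgrow (Finset.mem_insert_self b C)) hbC
  obtain rfl | hxC := Finset.mem_insert.1 hx
  · refine hentry.imp_right fun ⟨b', hb', hR⟩ => ⟨b', Finset.mem_insert_of_mem hb', hR, ?_⟩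
    rw [hold b' hb', Function.update_self]
    exact Nat.lt_succ_of_le (Finset.le_sup hb')
  · refine (hd x hxC).imp_right fun ⟨b', hb', hR, hlt⟩ =>
      ⟨b', Finset.mem_insert_of_mem hb', hR, ?_⟩
    rwa [hold b' hb', hold x hxC]

variable {A B : Finset V} {G : Finset (V × V)} {r x y b : V} {p l : List V} {f π : V → V}
  {d : V → ℕ}

/-- The edges joining every node `b ∈ B` to `f b`. -/
noncomputable def edgesOf (f : V → V) (B : Finset V) : Finset (V × V) := B.image fun b => (f b, b)

lemma mem_edgesOf : (x, y) ∈ edgesOf f B ↔ y ∈ B ∧ f y = x := by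
  simp only [edgesOf, Finset.mem_image, Prod.mk.injEq]
  exact ⟨fun ⟨b, hb, hfb, heq⟩ => heq ▸ ⟨hb, hfb⟩, fun ⟨hy, hfy⟩ => ⟨y, hy, hfy, rfl⟩⟩

lemma symMem_edgesOf : SymMem (edgesOf f B) (x, y) ↔ y ∈ B ∧ f y = x ∨ x ∈ B ∧ f x = y :=
  or_congr mem_edgesOf mem_edgesOf

lemma adj_edgesOf_left (h : b ∈ B) : Adj (edgesOf f B ∪ edgesOf π B) b (f b) :=
  Or.inr (Finset.mem_union_left _ (mem_edgesOf.2 ⟨h, rfl⟩))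

lemma adj_edgesOf_right (h : b ∈ B) : Adj (edgesOf f B ∪ edgesOf π B) b (π b) :=
  Or.inr (Finset.mem_union_right _ (mem_edgesOf.2 ⟨h, rfl⟩))

/-- The combinatorial data of an alternating spanning tree of `G` rooted at `r`: every `b ∈ B` is
matched to its child `f b` and has the parent `π b`. The rank `d`, which decreases towards the root,
ensures that following parents leads to `r`. -/
structure IsAltTreeData (G : Finset (V × V)) (A B : Finset V) (r : V) (f π : V → V) (d : V → ℕ) :
    Prop where
  root_mem : r ∈ A
  child_mem : ∀ b ∈ B, (f b, b) ∈ G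
  parent_mem : ∀ b ∈ B, (π b, b) ∈ G
  child_injOn : Set.InjOn f B
  child_ne_root : ∀ b ∈ B, f b ≠ r
  eq_root_or_child : ∀ a ∈ A, a = r ∨ ∃ b ∈ B, f b = a
  parent_eq : ∀ b ∈ B, π b = r ∨ ∃ b' ∈ B, π b = f b' ∧ d b' < d b

theorem PositiveSurplus.exists_isAltTreeData (h : PositiveSurplus G B) (hG : G ⊆ A ×ˢ B)
    (hcard : A.card = B.card + 1) : ∃ r f π d, IsAltTreeData G A B r f π d := by
  obtain ⟨a, -⟩ : A.Nonempty := Finset.card_pos.1 (by omega)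
  have : Nonempty V := ⟨a⟩
  obtain ⟨f, hinj, hf⟩ := h.exists_injOn
  have hsub : B.image f ⊆ A :=
    Finset.image_subset_iff.2 fun b hb => (Finset.mem_product.1 (hG (hf b hb))).1
  obtain ⟨r, hr⟩ : ∃ r, A \ B.image f = {r} := by
    rw [← Finset.card_eq_one, Finset.card_sdiff_of_subset hsub, Finset.card_image_of_injOn hinj]
    omega
  have hroot : ∀ a, a ∈ A ∧ a ∉ B.image f ↔ a = r := fun a => by
    rw [← Finset.mem_sdiff, hr, Finset.mem_singleton]
  have hcover : ∀ a ∈ A, a = r ∨ ∃ b ∈ B, f b = a := fun a ha =>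
    or_iff_not_imp_right.2 fun hno => (hroot a).1 ⟨ha, fun him => hno (Finset.mem_image.1 him)⟩
  obtain ⟨d, hd⟩ := exists_rank (B := B) (base := fun b => (r, b) ∈ G)
    (R := fun b' b => (f b', b) ∈ G) fun U hU hne => by
      obtain ⟨a, ha, haU⟩ := Finset.exists_mem_notMem_of_card_lt_card
        (Finset.card_image_le.trans_lt (h U hU hne))
      obtain ⟨b, hb, hab⟩ := mem_leftNbrs.1 ha
      refine ⟨b, hb, ?_⟩
      obtain rfl | ⟨b', hb', rfl⟩ := hcover a (leftNbrs_subset hG ha)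
      · exact Or.inl hab
      · exact Or.inr ⟨b', Finset.mem_sdiff.2 ⟨hb', fun hbU => haU (Finset.mem_image_of_mem f hbU)⟩,
          hab⟩
  have hparent : ∀ b ∈ B, ∃ a, (a, b) ∈ G ∧ (a = r ∨ ∃ b' ∈ B, a = f b' ∧ d b' < d b) := by
    intro b hb
    obtain hrb | ⟨b', hb', hab, hlt⟩ := hd b hb
    · exact ⟨r, hrb, Or.inl rfl⟩
    · exact ⟨f b', hab, Or.inr ⟨b', hb', rfl, hlt⟩⟩
  choose! π hπG hπ using hparent
  have hrA := (hroot r).2 rfl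
  exact ⟨r, f, π, d, hrA.1, hf, hπG, hinj,
    fun b hb heq => hrA.2 (heq ▸ Finset.mem_image_of_mem f hb), hcover, hπ⟩

namespace IsAltTreeData

lemma child_ne_parent (h : IsAltTreeData G A B r f π d) (hb : b ∈ B) : f b ≠ π b := by
  intro heq
  obtain hr | ⟨b', hb', hπ, hlt⟩ := h.parent_eq b hb
  · exact h.child_ne_root b hb (heq.trans hr)
  · exact hlt.ne (congrArg d (h.child_injOn hb hb' (heq.trans hπ))).symm

lemma edgesOf_child_subset (h : IsAltTreeData G A B r f π d) : edgesOf f B ⊆ G :=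
  Finset.image_subset_iff.2 h.child_mem

lemma edges_subset (h : IsAltTreeData G A B r f π d) : edgesOf f B ∪ edgesOf π B ⊆ G :=
  Finset.union_subset h.edgesOf_child_subset (Finset.image_subset_iff.2 h.parent_mem)

lemma isMatching (h : IsAltTreeData G A B r f π d) (hdisj : Disjoint A B) (hG : G ⊆ A ×ˢ B) :
    IsMatching (edgesOf f B) := by
  rintro ⟨_, b⟩ he ⟨_, b'⟩ he' hne
  obtain ⟨hb, rfl⟩ := mem_edgesOf.1 he
  obtain ⟨hb', rfl⟩ := mem_edgesOf.1 he'
  have hbb : b ≠ b' := fun heq => hne (by rw [heq])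
  have hA := notMem_of_mem_fst hdisj hG (h.child_mem b hb)
  have hA' := notMem_of_mem_fst hdisj hG (h.child_mem b' hb')
  exact ⟨fun heq => hbb (h.child_injOn hb hb' heq), (ne_of_mem_of_not_mem hb' hA).symm,
    ne_of_mem_of_not_mem hb hA', hbb⟩

lemma not_matched_root (h : IsAltTreeData G A B r f π d) (hdisj : Disjoint A B) :
    ¬ Matched (edgesOf f B) r := by
  rintro ⟨⟨_, b⟩, he, hr | rfl⟩ <;> obtain ⟨hb, rfl⟩ := mem_edgesOf.1 he
  · exact h.child_ne_root b hb hr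
  · exact Finset.disjoint_left.1 hdisj h.root_mem hb

lemma matched_of_ne_root (h : IsAltTreeData G A B r f π d) (hx : x ∈ A ∪ B) (hxr : x ≠ r) :
    Matched (edgesOf f B) x := by
  obtain hA | hB := Finset.mem_union.1 hx
  · obtain ⟨b, hb, hfb⟩ := (h.eq_root_or_child x hA).resolve_left hxr
    exact ⟨(x, b), mem_edgesOf.2 ⟨hb, hfb⟩, Or.inl rfl⟩
  · exact ⟨(f x, x), mem_edgesOf.2 ⟨hB, rfl⟩, Or.inr rfl⟩

lemma exists_parent_rank (h : IsAltTreeData G A B r f π d) (hdisj : Disjoint A B)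
    (hG : G ⊆ A ×ˢ B) : ∃ (parent : V → V) (rank : V → ℕ), ∀ b ∈ B,
      (parent (f b) = b ∧ rank b < rank (f b)) ∧ (parent b = π b ∧ rank (π b) < rank b) := by
  have : Nonempty V := ⟨r⟩
  have hinv : ∀ b ∈ B, Function.invFunOn f B (f b) = b := fun b hb =>
    h.child_injOn.leftInvOn_invFunOn hb
  have hf : ∀ b ∈ B, f b ∉ B := fun b hb => notMem_of_mem_fst hdisj hG (h.child_mem b hb)
  have hr : r ∉ B := Finset.disjoint_left.1 hdisj h.root_mem
  refine ⟨fun x => if x ∈ B then π x else Function.invFunOn f B x,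
    fun x => if x ∈ B then 2 * d x + 1 else if x = r then 0
      else 2 * d (Function.invFunOn f B x) + 2,
    fun b hb => ?_⟩
  have hrank : ∀ b ∈ B, f b ≠ r := h.child_ne_root
  refine ⟨by simp [hb, hf b hb, hinv b hb, hrank b hb], by simp [hb], ?_⟩
  obtain hπ | ⟨b', hb', hπ, hlt⟩ := h.parent_eq b hb
  · simp [hπ, hb, hr]
  · simp only [hπ, hf b' hb', hb, hrank b' hb', hinv b' hb', if_true, if_false]
    omega

lemma isAcyclic (h : IsAltTreeData G A B r f π d) (hdisj : Disjoint A B) (hG : G ⊆ A ×ˢ B) :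
    (toSimpleGraph (edgesOf f B ∪ edgesOf π B)).IsAcyclic := by
  obtain ⟨parent, rank, hrank⟩ := h.exists_parent_rank hdisj hG
  have hedge : ∀ {x b}, (x, b) ∈ edgesOf f B ∪ edgesOf π B →
      parent x = b ∧ rank b < rank x ∨ parent b = x ∧ rank x < rank b := by
    intro x b hxb
    obtain hxb | hxb := Finset.mem_union.1 hxb <;> obtain ⟨hb, rfl⟩ := mem_edgesOf.1 hxb
    exacts [Or.inl (hrank b hb).1, Or.inr (hrank b hb).2]
  refine isAcyclic_of_parent (parent := parent) (rank := rank) fun x y hxy => ?_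
  obtain hxy | hyx :=
    (toSimpleGraph_adj (fst_ne_snd_of_subset_product hdisj (h.edges_subset.trans hG))).1 hxy
  exacts [hedge hxy, (hedge hyx).symm]

lemma reachable_root (h : IsAltTreeData G A B r f π d) (hdisj : Disjoint A B) (hG : G ⊆ A ×ˢ B)
    (hx : x ∈ A ∪ B) : (toSimpleGraph (edgesOf f B ∪ edgesOf π B)).Reachable r x := by
  have hreach : ∀ {x y}, Adj (edgesOf f B ∪ edgesOf π B) x y →
      (toSimpleGraph (edgesOf f B ∪ edgesOf π B)).Reachable x y := fun hxy =>
    ((toSimpleGraph_adj (fst_ne_snd_of_subset_product hdisj (h.edges_subset.trans hG))).2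
      hxy).reachable
  have hB : ∀ b ∈ B, (toSimpleGraph (edgesOf f B ∪ edgesOf π B)).Reachable r b := by
    intro b hb
    induction hn : d b using Nat.strong_induction_on generalizing b with
    | _ n ih =>
      have hb_adj := (hreach (adj_edgesOf_right (f := f) (π := π) hb)).symm
      obtain hπ | ⟨b', hb', hπ, hlt⟩ := h.parent_eq b hb <;> rw [hπ] at hb_adj
      · exact hb_adj
      · exact ((ih _ (hn ▸ hlt) b' hb' rfl).trans (hreach (adj_edgesOf_left hb'))).trans hb_adj
  obtain hA | hxB := Finset.mem_union.1 hx
  · obtain rfl | ⟨b, hb, rfl⟩ := h.eq_root_or_child x hA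
    · rfl
    · exact (hB b hb).trans (hreach (adj_edgesOf_left hb))
  · exact hB x hxB

lemma eq_child_or_parent (h : IsAltTreeData G A B r f π d) (hdisj : Disjoint A B)
    (hG : G ⊆ A ×ˢ B) (hxy : Adj (edgesOf f B ∪ edgesOf π B) x y) (hy : y ∈ B) :
    x = f y ∨ x = π y := by
  obtain hxy | hyx := hxy
  · obtain hxy | hxy := Finset.mem_union.1 hxy
    exacts [Or.inl (mem_edgesOf.1 hxy).2.symm, Or.inr (mem_edgesOf.1 hxy).2.symm]
  · exact absurd hy (notMem_of_mem_fst hdisj hG (h.edges_subset hyx))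

/-- A path that enters `b ∈ B` from its parent has to leave it to its child, and a path can enter
`a ∈ A` along a matching edge only if it does not leave it along the same edge. -/
lemma isChain_symMem (h : IsAltTreeData G A B r f π d) (hdisj : Disjoint A B) (hG : G ⊆ A ×ˢ B)
    (hp : (x :: y :: l).IsChain (Adj (edgesOf f B ∪ edgesOf π B))) (hnodup : (x :: y :: l).Nodup)
    (hxy : SymMem (edgesOf f B) (x, y) ↔ x ∈ B) :
    (x :: y :: l).IsChain fun x y => SymMem (edgesOf f B) (x, y) ↔ x ∈ B := by
  induction l generalizing x y with
  | nil => exact List.isChain_pair.2 hxy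
  | cons z l ih =>
    obtain ⟨hadj, hp⟩ := List.isChain_cons_cons.1 hp
    obtain ⟨hx, hnodup⟩ := List.nodup_cons.1 hnodup
    have hxz : x ≠ z := fun heq => hx (by simp [heq])
    have hadj' := (List.isChain_cons_cons.1 hp).1
    have hmem := hadj.mem_iff_notMem hdisj (h.edges_subset.trans hG)
    have hmem' := hadj'.mem_iff_notMem hdisj (h.edges_subset.trans hG)
    refine List.isChain_cons_cons.2 ⟨hxy, ih hp hnodup ?_⟩
    rw [symMem_edgesOf] at hxy ⊢
    by_cases hy : y ∈ B
    · refine iff_of_true (Or.inr ⟨hy, ?_⟩) hy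
      have hxf : x ≠ f y := fun heq => hmem.1 (hxy.1 (Or.inl ⟨hy, heq.symm⟩)) hy
      have hxπ := (h.eq_child_or_parent hdisj hG hadj hy).resolve_left hxf
      exact ((h.eq_child_or_parent hdisj hG hadj'.symm hy).resolve_right
        fun hzπ => hxz (hxπ.trans hzπ.symm)).symm
    · refine iff_of_false ?_ hy
      obtain ⟨hxB, hfx⟩ := (hxy.2 (hmem.2 hy)).resolve_left fun h => hy h.1
      rintro (⟨hz, hfz⟩ | ⟨hyB, -⟩)
      exacts [hxz (h.child_injOn hxB hz (hfx.trans hfz.symm)), hy hyB]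

lemma isAlternating (h : IsAltTreeData G A B r f π d) (hdisj : Disjoint A B) (hG : G ⊆ A ×ˢ B)
    (hp : IsPath (edgesOf f B ∪ edgesOf π B) p r x) : IsAlternating (edgesOf f B) p := by
  rw [hp.isAlternating_iff hdisj (h.edges_subset.trans hG) h.root_mem (h.not_matched_root hdisj)]
  obtain ⟨hhead, -, hnodup, hchain⟩ := hp
  rcases p with _ | ⟨_, _ | ⟨y, l⟩⟩
  · exact List.isChain_nil
  · exact List.isChain_singleton _
  · obtain rfl := Option.some_injective _ hhead
    have hr := Finset.disjoint_left.1 hdisj h.root_mem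
    refine h.isChain_symMem hdisj hG hchain hnodup (iff_of_false ?_ hr)
    rw [symMem_edgesOf]
    rintro (⟨hy, hfy⟩ | ⟨hrB, -⟩)
    exacts [h.child_ne_root y hy hfy, hr hrB]

lemma degr_eq_two (h : IsAltTreeData G A B r f π d) (hdisj : Disjoint A B) (hG : G ⊆ A ×ˢ B)
    (hb : b ∈ B) : degr (edgesOf f B ∪ edgesOf π B) b = 2 := by
  have hstar : ((edgesOf f B ∪ edgesOf π B).filter fun e => e.1 = b ∨ e.2 = b) =
      {(f b, b), (π b, b)} := by
    ext ⟨x, y⟩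
    simp only [Finset.mem_filter, Finset.mem_insert, Finset.mem_singleton, Prod.mk.injEq]
    constructor
    · rintro ⟨hxy, rfl | rfl⟩
      · exact absurd hb (notMem_of_mem_fst hdisj hG (h.edges_subset hxy))
      · simpa using h.eq_child_or_parent hdisj hG (Or.inl hxy) hb
    · rintro (⟨rfl, rfl⟩ | ⟨rfl, rfl⟩)
      · exact ⟨Finset.mem_union_left _ (mem_edgesOf.2 ⟨hb, rfl⟩), Or.inr rfl⟩
      · exact ⟨Finset.mem_union_right _ (mem_edgesOf.2 ⟨hb, rfl⟩), Or.inr rfl⟩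
  rw [degr, hstar, Finset.card_pair fun heq => h.child_ne_parent hb (congrArg Prod.fst heq)]

theorem isAltTreeOn (h : IsAltTreeData G A B r f π d) (hdisj : Disjoint A B) (hG : G ⊆ A ×ˢ B) :
    IsAltTreeOn (edgesOf f B ∪ edgesOf π B) (edgesOf f B) r (A ∪ B) := by
  have hT := h.edges_subset.trans hG
  have hloop := fst_ne_snd_of_subset_product hdisj hT
  refine ⟨isTreeOn_of_isAcyclic hloop (fun e he => ?_) (h.isAcyclic hdisj hG)
    fun x => h.reachable_root hdisj hG, Finset.mem_union_left _ h.root_mem,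
    h.not_matched_root hdisj, fun x hx => h.matched_of_ne_root hx,
    fun x _ p => h.isAlternating hdisj hG, fun x _ p hp => ?_⟩
  · exact (Finset.mem_product.1 (hT he)).imp (Finset.mem_union_left _) (Finset.mem_union_right _)
  · obtain ⟨w, -, rfl⟩ := (isPath_iff_exists_walk hloop).1 hp
    have hparity : Even w.length ↔ x ∉ B :=
      (even_length_walk_iff hdisj hT w).trans
        (by simp [Finset.disjoint_left.1 hdisj h.root_mem])
    rw [SimpleGraph.Walk.length_support, Nat.add_sub_cancel, ← Nat.not_even_iff_odd, hparity,
      not_not]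
    refine ⟨h.degr_eq_two hdisj hG, fun hdeg hx => ?_⟩
    rw [h.degr_eq_two hdisj hG hx] at hdeg
    omega

end IsAltTreeData

theorem sastg_iff {E : Finset (V × V)} {v : V → V → ℝ → ℝ} {O : V → ℝ} (hdisj : Disjoint A B)
    (hE : E ⊆ A ×ˢ B) (hcard : A.card = B.card + 1) :
    SASTG A B E v O ↔ Stable E v O ∧ PositiveSurplus (EQg E v O) B := by
  have hEQ : EQg E v O ⊆ A ×ˢ B := (Finset.filter_subset _ _).trans hE
  refine and_congr_right fun _ => ⟨?_, fun h => ?_⟩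
  · rintro ⟨M, T, r, hM, hMEQ, -, hTEQ, htree⟩
    exact positiveSurplus_of_isAltTreeOn hdisj hEQ (by omega) hM hMEQ hTEQ htree
  · obtain ⟨r, f, π, d, hdata⟩ := h.exists_isAltTreeData hEQ hcard
    have htree := hdata.isAltTreeOn hdisj hEQ
    refine ⟨_, _, r, hdata.isMatching hdisj hEQ, hdata.edgesOf_child_subset,
      ⟨r, ⟨htree.2.1, htree.2.2.1⟩, fun x hx => ?_⟩, hdata.edges_subset, htree⟩
    exact by_contra fun hne => hx.2 (hdata.matched_of_ne_root hx.1 hne)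

end TreeOfSurplus

open Filter Topology

section Market

variable {α β : Type*} {A T : Finset α} {B S : Finset β} {E : Finset (α × β)}
  {c : α → β → ℝ ≃o ℝ} {p q : β → ℝ} {a i : α} {b : β} {m o : ℝ}

/-- The costs available to buyer `a` when the price of good `b` is `p b`: buying the good `b` at
price `x` costs `a` the amount `c a b x`, and `E` says which goods `a` may buy. -/
def costs (E : Finset (α × β)) (c : α → β → ℝ ≃o ℝ) (p : β → ℝ) (a : α) : Set ℝ :=
  {x | ∃ b, (a, b) ∈ E ∧ c a b (p b) = x}

/-- The graph joining every buyer to the goods that are cheapest for them at the prices `p`. -/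
noncomputable def demandGraph (E : Finset (α × β)) (c : α → β → ℝ ≃o ℝ) (p : β → ℝ) :
    Finset (α × β) :=
  E.filter fun e => ∀ b, (e.1, b) ∈ E → c e.1 e.2 (p e.2) ≤ c e.1 b (p b)

lemma mem_demandGraph :
    (a, b) ∈ demandGraph E c p ↔
      (a, b) ∈ E ∧ ∀ b', (a, b') ∈ E → c a b (p b) ≤ c a b' (p b') :=
  Finset.mem_filter

lemma demandGraph_subset : demandGraph E c p ⊆ E := Finset.filter_subset _ _

lemma exists_mem_demandGraph (h : (a, b) ∈ E) : ∃ b', (a, b') ∈ demandGraph E c p := by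
  obtain ⟨⟨a', b'⟩, hmem, hmin⟩ := (E.filter fun e => e.1 = a).exists_min_image
    (fun e => c a e.2 (p e.2)) ⟨(a, b), Finset.mem_filter.2 ⟨h, rfl⟩⟩
  obtain ⟨hE, rfl⟩ := Finset.mem_filter.1 hmem
  exact ⟨b', mem_demandGraph.2 ⟨hE, fun b hb => hmin (a', b) (Finset.mem_filter.2 ⟨hb, rfl⟩)⟩⟩

lemma isLeast_costs (h : (a, b) ∈ demandGraph E c p) : IsLeast (costs E c p a) (c a b (p b)) := by
  refine ⟨⟨b, demandGraph_subset h, rfl⟩, ?_⟩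
  rintro _ ⟨b', hb', rfl⟩
  exact (mem_demandGraph.1 h).2 b' hb'

lemma demandGraph_filter_fst (P : α → Prop) [DecidablePred P] :
    demandGraph (E.filter fun e => P e.1) c p = (demandGraph E c p).filter fun e => P e.1 := by
  ext ⟨a, b⟩
  simp only [demandGraph, Finset.mem_filter]
  exact ⟨fun ⟨⟨hE, hP⟩, hmin⟩ => ⟨⟨hE, fun b' hb' => hmin b' ⟨hb', hP⟩⟩, hP⟩,
    fun ⟨⟨hE, hmin⟩, hP⟩ => ⟨⟨hE, hP⟩, fun b' hb' => hmin b' hb'.1⟩⟩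

lemma mem_demandGraph_of_le (h : (a, b) ∈ demandGraph E c p) (hpq : p ≤ q) (hb : q b = p b) :
    (a, b) ∈ demandGraph E c q := by
  obtain ⟨hE, hmin⟩ := mem_demandGraph.1 h
  refine mem_demandGraph.2 ⟨hE, fun b' hb' => ?_⟩
  rw [hb]
  exact (hmin b' hb').trans ((c a b').monotone (hpq b'))

lemma eventually_demandGraph_subset : ∀ᶠ q in 𝓝 p, demandGraph E c q ⊆ demandGraph E c p := by
  have hcont : ∀ a b, Continuous fun q : β → ℝ => c a b (q b) := fun a b =>
    (c a b).continuous.comp (continuous_apply b)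
  have hstays : ∀ᶠ q in 𝓝 p, ∀ e ∈ E, e ∉ demandGraph E c p → e ∉ demandGraph E c q := by
    refine (Finset.eventually_all E).2 fun ⟨a, b⟩ hE => ?_
    by_cases hD : (a, b) ∈ demandGraph E c p
    · exact Eventually.of_forall fun q h => absurd hD h
    obtain ⟨b', hb', hlt⟩ : ∃ b', (a, b') ∈ E ∧ c a b' (p b') < c a b (p b) := by
      simpa [mem_demandGraph, hE] using hD
    filter_upwards [(hcont a b').continuousAt.eventually_lt (hcont a b).continuousAt hlt]
      with q hq _ hDq
    exact hq.not_ge ((mem_demandGraph.1 hDq).2 b' hb')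
  filter_upwards [hstays] with q hq e he
  exact by_contra fun hD => hq e (demandGraph_subset he) hD he

/-- Comparison principle: the buyers who at `q` demand some good dearer than at `p` outnumber these
goods, so by surplus at `p` one of them demands at `p` a good that is not dearer at `q`. -/
lemma le_of_costs_le (hE : E ⊆ A ×ˢ B) (hcard : A.card = B.card + 1)
    (hp : PositiveSurplus (demandGraph E c p) B) (hq : PositiveSurplus (demandGraph E c q) B)
    (hi : i ∈ A) (hmp : m ∈ lowerBounds (costs E c p i)) (hmq : ∃ x ∈ costs E c q i, x ≤ m) :
    ∀ b ∈ B, q b ≤ p b := by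
  by_contra! hlt
  set U := B.filter fun b => p b < q b
  set W := leftNbrs (demandGraph E c q) U
  have hUW : U.card < W.card := by
    obtain ⟨b, hb, hbU⟩ := hlt
    exact hq U (Finset.filter_subset _ _) ⟨b, Finset.mem_filter.2 ⟨hb, hbU⟩⟩
  have hiW : i ∉ W := by
    rintro hiW
    obtain ⟨u, hu, hiu⟩ := mem_leftNbrs.1 hiW
    obtain ⟨_, ⟨k, hk, rfl⟩, hkm⟩ := hmq
    have hum : c i u (q u) ≤ m := ((mem_demandGraph.1 hiu).2 k hk).trans hkm
    have hmu : m ≤ c i u (p u) := hmp ⟨u, demandGraph_subset hiu, rfl⟩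
    exact ((c i u).strictMono (Finset.mem_filter.1 hu).2).not_ge (hum.trans hmu)
  obtain ⟨a, ha, b, hab, hbU⟩ := hp.exists_mem_of_card_lt (demandGraph_subset.trans hE) hcard
    ⟨leftNbrs_subset (demandGraph_subset.trans hE), fun h => hiW (h hi)⟩ hUW
  obtain ⟨u, hu, hau⟩ := mem_leftNbrs.1 ha
  have hcost : c a b (p b) < c a b (q b) :=
    calc c a b (p b) ≤ c a u (p u) := (mem_demandGraph.1 hab).2 u (demandGraph_subset hau)
      _ < c a u (q u) := (c a u).strictMono (Finset.mem_filter.1 hu).2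
      _ ≤ c a b (q b) := (mem_demandGraph.1 hau).2 b (demandGraph_subset hab)
  exact hbU (Finset.mem_filter.2
    ⟨(Finset.mem_product.1 (hE (demandGraph_subset hab))).2, (c a b).lt_iff_lt.1 hcost⟩)

lemma demandGraph_congr (hE : E ⊆ A ×ˢ B) (h : ∀ b ∈ B, q b = p b) :
    demandGraph E c q = demandGraph E c p := by
  have hright : ∀ {a b}, (a, b) ∈ E → q b = p b := fun hab => h _ (Finset.mem_product.1 (hE hab)).2
  refine Finset.filter_congr fun e he => forall₂_congr fun b hb => ?_
  rw [hright he, hright hb]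

lemma costs_congr (hE : E ⊆ A ×ˢ B) (h : ∀ b ∈ B, q b = p b) : costs E c q a = costs E c p a := by
  ext x
  refine exists_congr fun b => and_congr_right fun hab => ?_
  rw [h b (Finset.mem_product.1 (hE hab)).2]

lemma eventually_lt_costs (h : ∀ x ∈ costs E c p a, o < x) :
    ∀ᶠ q in 𝓝 p, ∀ x ∈ costs E c q a, o < x := by
  have hE : ∀ᶠ q : β → ℝ in 𝓝 p, ∀ e ∈ E, e.1 = a → o < c e.1 e.2 (q e.2) := by
    refine (Finset.eventually_all E).2 fun ⟨a', b⟩ hab => ?_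
    by_cases ha : a' = a
    · subst ha
      filter_upwards [((c a' b).continuous.comp (continuous_apply b)).continuousAt.eventually
        (lt_mem_nhds (h _ ⟨b, hab, rfl⟩))] with q hq _ using hq
    · exact Eventually.of_forall fun q h => absurd h ha
  filter_upwards [hE] with q hq
  rintro _ ⟨b, hab, rfl⟩
  exact hq (a, b) hab rfl

lemma le_of_isLeast_costs_le (hE : E ⊆ A ×ˢ B) (hcard : A.card = B.card + 1)
    (hp : PositiveSurplus (demandGraph E c p) B) (hq : PositiveSurplus (demandGraph E c q) B)
    (hi : i ∈ A) (hpo : IsLeast (costs E c p i) o) (hqm : IsLeast (costs E c q i) m) (hmo : m ≤ o)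
    (hqp : ∀ b ∉ B, q b = p b) : q ≤ p := by
  intro b
  by_cases hb : b ∈ B
  · exact le_of_costs_le hE hcard hp hq hi hpo.2 ⟨m, hqm.1, hmo⟩ b hb
  · exact (hqp b hb).le

/-- The prices stay in a compact box, and the comparison principle identifies every cluster point
with `p`. -/
lemma tendsto_prices (hE : E ⊆ A ×ˢ B) (hcard : A.card = B.card + 1)
    (hp : PositiveSurplus (demandGraph E c p) B) (hi : i ∈ A) (hm : IsLeast (costs E c p i) m)
    {Q : ℝ → β → ℝ} (hQp : ∀ o > m, ∀ b ∉ B, Q o b = p b)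
    (hQ : ∀ o > m, PositiveSurplus (demandGraph E c (Q o)) B)
    (hQi : ∀ o > m, IsLeast (costs E c (Q o) i) o) :
    Tendsto Q (𝓝[>] m) (𝓝 p) := by
  have hmem : ∀ᶠ o in 𝓝[>] m, Q o ∈ Set.Icc p (Q (m + 1)) := by
    filter_upwards [Ioo_mem_nhdsGT (lt_add_one m)] with o ho
    have hm1 := lt_add_one m
    refine ⟨le_of_isLeast_costs_le hE hcard (hQ o ho.1) hp hi (hQi o ho.1) hm ho.1.le
        fun b hb => (hQp o ho.1 b hb).symm,
      le_of_isLeast_costs_le hE hcard (hQ _ hm1) (hQ o ho.1) hi (hQi _ hm1) (hQi o ho.1) ho.2.le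
        fun b hb => ?_⟩
    rw [hQp o ho.1 b hb, hQp _ hm1 b hb]
  refine isCompact_Icc.tendsto_nhds_of_unique_mapClusterPt hmem fun y hyK hy => ?_
  have hys : PositiveSurplus (demandGraph E c y) B := by
    obtain ⟨o, hsub, ho⟩ := ((hy.frequently eventually_demandGraph_subset).and_eventually
      self_mem_nhdsWithin).exists
    exact (hQ o ho).mono hsub Finset.Subset.rfl
  have hycost : ∃ x ∈ costs E c y i, x ≤ m := by
    by_contra! hlt
    obtain ⟨k, hk, -⟩ := hm.1
    obtain ⟨b, hb⟩ := exists_mem_demandGraph (c := c) (p := y) hk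
    obtain ⟨t, hmt, hty⟩ := exists_between (hlt _ (isLeast_costs hb).1)
    have hlarge : ∀ᶠ q in 𝓝 y, ∀ x ∈ costs E c q i, t < x :=
      eventually_lt_costs fun x hx => hty.trans_le ((isLeast_costs hb).2 hx)
    obtain ⟨o, hlt_cost, ho⟩ :=
      ((hy.frequently hlarge).and_eventually (Ioo_mem_nhdsGT hmt)).exists
    exact (hlt_cost o (hQi o ho.1).1).not_gt ho.2
  funext b
  by_cases hb : b ∈ B
  · exact (le_of_costs_le hE hcard hp hys hi hm.2 hycost b hb).antisymm (hyK.1 b)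
  · exact ((hyK.2 b).trans_eq (hQp _ (lt_add_one m) b hb)).antisymm (hyK.1 b)

lemma frequently_positiveSurplus_gt (hE : E ⊆ A ×ˢ B) (hcard : A.card = B.card + 1)
    (hp : PositiveSurplus (demandGraph E c p) B) (hi : i ∈ A) (hm : IsLeast (costs E c p i) m)
    (hraise : ∀ o > m, ∃ q, PositiveSurplus (demandGraph E c q) B ∧ IsLeast (costs E c q i) o) :
    ∃ᶠ q in 𝓝 p, p < q ∧ (∀ b ∉ B, q b = p b) ∧ PositiveSurplus (demandGraph E c q) B := by
  have hraise' : ∀ o, ∃ q, o > m → (∀ b ∉ B, q b = p b) ∧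
      PositiveSurplus (demandGraph E c q) B ∧ IsLeast (costs E c q i) o := by
    intro o
    by_cases ho : o > m
    · obtain ⟨q, hq, hqi⟩ := hraise o ho
      have hpiecewise : ∀ b ∈ B, B.piecewise q p b = q b :=
        fun b hb => B.piecewise_eq_of_mem q p hb
      refine ⟨B.piecewise q p, fun _ => ⟨fun b hb => B.piecewise_eq_of_notMem q p hb, ?_, ?_⟩⟩
      · rwa [demandGraph_congr hE hpiecewise]
      · rwa [costs_congr hE hpiecewise]
    · exact ⟨p, fun h => absurd h ho⟩
  choose Q hQ using hraise'
  have htendsto := tendsto_prices hE hcard hp hi hm (fun o ho => (hQ o ho).1)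
    (fun o ho => (hQ o ho).2.1) (fun o ho => (hQ o ho).2.2)
  refine htendsto.frequently (Eventually.frequently ?_)
  filter_upwards [self_mem_nhdsWithin] with o ho
  obtain ⟨hQp, hQs, hQi⟩ := hQ o ho
  have hle := le_of_isLeast_costs_le hE hcard hQs hp hi hQi hm (Set.mem_Ioi.1 ho).le
    fun b hb => (hQp b hb).symm
  refine ⟨hle.lt_of_ne fun heq => ?_, hQp, hQs⟩
  exact (Set.mem_Ioi.1 ho).ne (hm.unique (heq ▸ hQi))

/-- The goods in `B` that cost buyer `i` more than `o` or are not available to `i`. -/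
noncomputable def unaffordable (E : Finset (α × β)) (c : α → β → ℝ ≃o ℝ) (B : Finset β) (i : α)
    (o : ℝ) (p : β → ℝ) : Finset β :=
  B.filter fun b => (i, b) ∈ E → o < c i b (p b)

/-- The prices `p` are feasible for the target cost `o` of buyer `i` if the demand of the other
buyers has surplus on the goods that `i` cannot get for `o`. The prices sought for the target `o`
are maximal feasible ones. -/
def Feasible (E : Finset (α × β)) (c : α → β → ℝ ≃o ℝ) (B : Finset β) (i : α) (o : ℝ)
    (p : β → ℝ) : Prop :=
  PositiveSurplus (demandGraph (E.filter fun e => e.1 ≠ i) c p) (unaffordable E c B i o p)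

lemma mem_unaffordable :
    b ∈ unaffordable E c B i o p ↔ b ∈ B ∧ ((i, b) ∈ E → o < c i b (p b)) :=
  Finset.mem_filter

lemma eventually_unaffordable_subset :
    ∀ᶠ q in 𝓝 p, unaffordable E c B i o p ⊆ unaffordable E c B i o q := by
  have hE : ∀ᶠ q : β → ℝ in 𝓝 p, ∀ b ∈ B, o < c i b (p b) → o < c i b (q b) := by
    refine (Finset.eventually_all B).2 fun b _ => ?_
    by_cases hb : o < c i b (p b)
    · filter_upwards [((c i b).continuous.comp (continuous_apply b)).continuousAt.eventually
        (lt_mem_nhds hb)] with q hq _ using hq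
    · exact Eventually.of_forall fun q h => absurd h hb
  filter_upwards [hE] with q hq b hb
  obtain ⟨hbB, hlt⟩ := mem_unaffordable.1 hb
  exact mem_unaffordable.2 ⟨hbB, fun hib => hq b hbB (hlt hib)⟩

lemma isClosed_feasible : IsClosed {p | Feasible E c B i o p} := by
  refine isClosed_iff_frequently.2 fun p hp => ?_
  obtain ⟨q, ⟨hq, hdemand⟩, hunaff⟩ :=
    ((hp.and_eventually eventually_demandGraph_subset).and_eventually
      eventually_unaffordable_subset).exists
  exact PositiveSurplus.mono hq hdemand hunaff

/-- Climbing from `x` to `y` at least one more price is passed, so `B.card` steps starting at `x₀`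
pass all prices. -/
lemma exists_forall_le_of_exists_le {Q : Set (β → ℝ)} {x₀ : ℝ}
    (h : ∀ x ≥ x₀, ∃ y, ∀ q ∈ Q, (∃ b ∈ B, x < q b) → ∃ b ∈ B, x < q b ∧ q b ≤ y) :
    ∃ K, ∀ q ∈ Q, ∀ b ∈ B, q b ≤ K := by
  have hclimb : ∀ k ≤ B.card, ∃ x ≥ x₀, ∀ q ∈ Q, k ≤ (B.filter fun b => q b ≤ x).card := by
    intro k
    induction k with
    | zero => exact fun _ => ⟨x₀, le_rfl, fun q _ => Nat.zero_le _⟩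
    | succ k ih =>
      intro hk
      obtain ⟨x, hx, hcount⟩ := ih (by omega)
      obtain ⟨y, hy⟩ := h x hx
      refine ⟨max x y, le_max_of_le_left hx, fun q hq => ?_⟩
      have hsub : (B.filter fun b => q b ≤ x) ⊆ B.filter fun b => q b ≤ max x y :=
        Finset.monotone_filter_right B fun b _ hb => le_max_of_le_left hb
      by_cases hall : ∀ b ∈ B, q b ≤ x
      · rw [← Finset.filter_true_of_mem hall] at hk
        exact hk.trans (Finset.card_le_card hsub)
      · push Not at hall
        obtain ⟨b, hb, hxb, hby⟩ := hy q hq hall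
        refine (hcount q hq).trans_lt (Finset.card_lt_card ((Finset.ssubset_iff_of_subset hsub).2
          ⟨b, Finset.mem_filter.2 ⟨hb, le_max_of_le_right hby⟩, fun hbx => ?_⟩))
        exact (Finset.mem_filter.1 hbx).2.not_gt hxb
  obtain ⟨K, -, hK⟩ := hclimb B.card le_rfl
  refine ⟨K, fun q hq => Finset.filter_eq_self.1 (Finset.eq_of_subset_of_card_le
    (Finset.filter_subset _ _) (hK q hq))⟩

lemma exists_forall_feasible_le (hE : E ⊆ A ×ˢ B) (hcard : A.card = B.card + 1)
    (hs : PositiveSurplus E B) (hi : i ∈ A) :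
    ∃ K, ∀ q, Feasible E c B i o q → ∀ b ∈ B, q b ≤ K := by
  obtain ⟨x₀, hx₀⟩ := (B.image fun b => (c i b).symm o).exists_le
  refine exists_forall_le_of_exists_le (Q := {q | Feasible E c B i o q}) (x₀ := x₀)
    fun x hx => ?_
  obtain ⟨y, hy⟩ := ((A ×ˢ B ×ˢ B).image fun t => (c t.1 t.2.1).symm (c t.1 t.2.2 x)).exists_le
  refine ⟨y, fun q hq hdear => ?_⟩
  set J := B.filter fun b => x < q b
  set D := demandGraph (E.filter fun e => e.1 ≠ i) c q
  have hDE : D ⊆ E.filter fun e => e.1 ≠ i := demandGraph_subset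
  have hJunaff : J ⊆ unaffordable E c B i o q := by
    intro b hb
    obtain ⟨hbB, hxb⟩ := Finset.mem_filter.1 hb
    refine mem_unaffordable.2 ⟨hbB, fun _ => ?_⟩
    rw [← (c i b).symm_apply_lt]
    exact ((hx₀ _ (Finset.mem_image_of_mem _ hbB)).trans hx).trans_lt hxb
  have hJlt : J.card < (leftNbrs D J).card := by
    obtain ⟨b, hb, hxb⟩ := hdear
    exact hq J hJunaff ⟨b, Finset.mem_filter.2 ⟨hb, hxb⟩⟩
  have hiJ : i ∉ leftNbrs D J := by
    intro hmem
    obtain ⟨b, -, hib⟩ := mem_leftNbrs.1 hmem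
    exact (Finset.mem_filter.1 (hDE hib)).2 rfl
  obtain ⟨a, ha, l, hal, hlJ⟩ := hs.exists_mem_of_card_lt hE hcard
    ⟨leftNbrs_subset ((hDE.trans (Finset.filter_subset _ _)).trans hE), fun h => hiJ (h hi)⟩ hJlt
  obtain ⟨j, hj, haj⟩ := mem_leftNbrs.1 ha
  have hjB := Finset.mem_filter.1 hj
  obtain ⟨haA, hlB⟩ := Finset.mem_product.1 (hE hal)
  have hlx : q l ≤ x := not_lt.1 fun hxl => hlJ (Finset.mem_filter.2 ⟨hlB, hxl⟩)
  have hjy : (c a j).symm (c a l x) ≤ y := hy _ (Finset.mem_image.2 ⟨(a, j, l),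
    Finset.mem_product.2 ⟨haA, Finset.mem_product.2 ⟨hjB.1, hlB⟩⟩, rfl⟩)
  refine ⟨j, hjB.1, hjB.2, le_trans ((c a j).le_symm_apply.2 ?_) hjy⟩
  exact ((mem_demandGraph.1 haj).2 l (Finset.mem_filter.2 ⟨hal, fun hai => hiJ (hai ▸ ha)⟩)).trans
    ((c a l).monotone hlx)

lemma exists_maximal_feasible (hE : E ⊆ A ×ˢ B) (hcard : A.card = B.card + 1)
    (hs : PositiveSurplus E B) (hi : i ∈ A) (hp : Feasible E c B i o p) :
    ∃ p' ≥ p, Feasible E c B i o p' ∧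
      ∀ q > p', (∀ b ∉ B, q b = p' b) → ¬ Feasible E c B i o q := by
  obtain ⟨K, hK⟩ := exists_forall_feasible_le (c := c) (o := o) hE hcard hs hi
  have hcompact : IsCompact (Set.Icc p (B.piecewise (fun _ => K) p) ∩ {q | Feasible E c B i o q}) :=
    isCompact_Icc.inter_right isClosed_feasible
  have hmem : ∀ {q}, p ≤ q → (∀ b ∉ B, q b = p b) → Feasible E c B i o q →
      q ∈ Set.Icc p (B.piecewise (fun _ => K) p) ∩ {q | Feasible E c B i o q} := by
    refine fun {q} hpq hoff hq => ⟨⟨hpq, fun b => ?_⟩, hq⟩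
    by_cases hb : b ∈ B
    · rw [B.piecewise_eq_of_mem _ _ hb]
      exact hK q hq b hb
    · rw [B.piecewise_eq_of_notMem _ _ hb, hoff b hb]
  obtain ⟨p', ⟨⟨hpp', hp'K⟩, hp'⟩, hmax⟩ := hcompact.exists_isMaxOn
    ⟨p, hmem le_rfl (fun _ _ => rfl) hp⟩ (f := fun q => ∑ b ∈ B, q b) (by fun_prop)
  have hoff' : ∀ b ∉ B, p' b = p b := fun b hb =>
    ((hp'K b).trans_eq (B.piecewise_eq_of_notMem _ _ hb)).antisymm (hpp' b)
  refine ⟨p', hpp', hp', fun q hq hoff hqf => ?_⟩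
  obtain ⟨hle, b, hlt⟩ := Pi.lt_def.1 hq
  have hbB : b ∈ B := by_contra fun hb => hlt.ne' (hoff b hb)
  have hsum : ∑ b ∈ B, p' b < ∑ b ∈ B, q b := Finset.sum_lt_sum (fun b _ => hle b) ⟨b, hbB, hlt⟩
  exact hsum.not_ge (hmax (hmem (hpp'.trans hle) (fun b hb => (hoff b hb).trans (hoff' b hb)) hqf))

lemma feasible_of_le (hp : PositiveSurplus (demandGraph E c p) B) (hm : IsLeast (costs E c p i) m)
    (hmo : m ≤ o) (hpq : p ≤ q) (hq : ∀ b ∈ unaffordable E c B i o q, q b = p b) :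
    Feasible E c B i o q := by
  intro S hS hne
  refine (hp S (hS.trans (Finset.filter_subset _ _)) hne).trans_le (Finset.card_le_card ?_)
  intro a ha
  obtain ⟨b, hb, hab⟩ := mem_leftNbrs.1 ha
  have hqb := hq b (hS hb)
  have hai : a ≠ i := by
    rintro rfl
    have hlt := (mem_unaffordable.1 (hS hb)).2 (demandGraph_subset hab)
    exact (hqb ▸ hlt).not_ge (((isLeast_costs hab).unique hm).trans_le hmo)
  rw [demandGraph_filter_fst (· ≠ i)]
  exact mem_leftNbrs.2 ⟨b, hb, Finset.mem_filter.2 ⟨mem_demandGraph_of_le hab hpq hqb, hai⟩⟩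

lemma exists_feasible (hp : PositiveSurplus (demandGraph E c p) B) (hm : IsLeast (costs E c p i) m)
    (hmo : m ≤ o) : ∃ q, Feasible E c B i o q ∧ o ∈ lowerBounds (costs E c q i) := by
  set q : β → ℝ := fun b => if (i, b) ∈ E then max (p b) ((c i b).symm o) else p b with hq
  have hqi : ∀ {b}, (i, b) ∈ E → c i b (q b) = max (c i b (p b)) o := by
    intro b hib
    rw [congrFun hq b, if_pos hib, (c i b).monotone.map_max, OrderIso.apply_symm_apply]
  refine ⟨q, feasible_of_le hp hm hmo (fun b => ?_) fun b hb => ?_, ?_⟩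
  · by_cases hib : (i, b) ∈ E
    · exact (le_max_left _ _).trans_eq (if_pos hib).symm
    · exact (if_neg hib).ge
  · by_cases hib : (i, b) ∈ E
    · have hlt := (mem_unaffordable.1 hb).2 hib
      rw [hqi hib, lt_max_iff, or_iff_left (lt_irrefl o)] at hlt
      exact (c i b).injective ((hqi hib).trans (max_eq_left hlt.le))
    · exact if_neg hib
  · rintro _ ⟨b, hib, rfl⟩
    exact (le_max_right _ _).trans_eq (hqi hib).symm

/-- The goods in `S` get their surplus from buyers in `T`, and the other goods keep theirs because
their old neighbours do not belong to `T`. -/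
lemma PositiveSurplus.raise {U U' : Finset β} (hp : PositiveSurplus (demandGraph E c p) U)
    (hT : rightNbrs (demandGraph E c p) T ⊆ S)
    (hq : PositiveSurplus (demandGraph (E.filter fun e => e.1 ∈ T ∧ e.2 ∈ S) c q) S)
    (hpq : p ≤ q) (hoff : ∀ b ∉ S, q b = p b) (hsub : demandGraph E c q ⊆ demandGraph E c p)
    (hU : U' ⊆ U ∪ S) : PositiveSurplus (demandGraph E c q) U' := by
  have hrest : PositiveSurplus ((demandGraph E c p).filter fun e => e.2 ∉ S) (U \ S) := by
    intro R hR hne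
    refine (hp R (hR.trans Finset.sdiff_subset) hne).trans_le (Finset.card_le_card fun a ha => ?_)
    obtain ⟨b, hb, hab⟩ := mem_leftNbrs.1 ha
    exact mem_leftNbrs.2
      ⟨b, hb, Finset.mem_filter.2 ⟨hab, (Finset.mem_sdiff.1 (hR hb)).2⟩⟩
  refine (hq.union hrest ?_).mono (Finset.union_subset ?_ ?_) ?_
  · rintro ⟨a, b⟩ hab ⟨a', b'⟩ hab' rfl
    obtain ⟨hab', hb'⟩ := Finset.mem_filter.1 hab'
    have haT := (Finset.mem_filter.1 (demandGraph_subset hab)).2.1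
    exact hb' (hT (mem_rightNbrs.2 ⟨a, haT, hab'⟩))
  · rintro ⟨a, b⟩ hab
    obtain ⟨habE, haT, -⟩ := Finset.mem_filter.1 (demandGraph_subset hab)
    obtain ⟨k, hk⟩ := exists_mem_demandGraph (c := c) (p := q) habE
    have hkS := hT (mem_rightNbrs.2 ⟨a, haT, hsub hk⟩)
    have hbk := (mem_demandGraph.1 hab).2 k
      (Finset.mem_filter.2 ⟨demandGraph_subset hk, haT, hkS⟩)
    exact mem_demandGraph.2 ⟨habE, fun b' hb' => hbk.trans ((mem_demandGraph.1 hk).2 b' hb')⟩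
  · rintro ⟨a, b⟩ hab
    obtain ⟨hab, hb⟩ := Finset.mem_filter.1 hab
    exact mem_demandGraph_of_le hab hpq (hoff b hb)
  · rwa [Finset.union_sdiff_self_eq_union, Finset.union_comm]

lemma unaffordable_subset_union (hoff : ∀ b ∉ S, q b = p b) :
    unaffordable E c B i o q ⊆ unaffordable E c B i o p ∪ S := by
  intro b hb
  by_cases hbS : b ∈ S
  · exact Finset.mem_union_right _ hbS
  · refine Finset.mem_union_left _ (mem_unaffordable.2 ?_)
    rw [← hoff b hbS]
    exact mem_unaffordable.1 hb

/-- If this failed, the prices in a minimal overdemanded submarket could be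
raised without leaving the feasible region. -/
lemma Feasible.card_le_card_rightNbrs (hE : E ⊆ A ×ˢ B) (hcard : A.card = B.card + 1)
    (hs : PositiveSurplus E B) (hi : i ∈ A) (hp : Feasible E c B i o p)
    (hmax : ∀ q > p, (∀ b ∉ B, q b = p b) → ¬ Feasible E c B i o q)
    (hraise : ∀ (T : Finset α), ∀ S ⊂ B, ∀ E' ⊆ T ×ˢ S, T.card = S.card + 1 → S.Nonempty →
      PositiveSurplus (demandGraph E' c p) S →
      ∃ᶠ q in 𝓝 p, p < q ∧ (∀ b ∉ S, q b = p b) ∧ PositiveSurplus (demandGraph E' c q) S)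
    {W : Finset α} (hW : W ⊆ A.erase i) :
    W.card ≤ (rightNbrs (demandGraph (E.filter fun e => e.1 ≠ i) c p) W).card := by
  by_contra! hlt
  set D := demandGraph (E.filter fun e => e.1 ≠ i) c p
  obtain ⟨T, hTW, hTcard, hT⟩ := exists_overdemanded hlt
  set S := rightNbrs D T
  have hDE : D ⊆ E := demandGraph_subset.trans (Finset.filter_subset _ _)
  have hSB : S ⊆ B := rightNbrs_subset (hDE.trans hE)
  have hTA := Finset.card_le_card (hTW.trans hW)
  rw [Finset.card_erase_of_mem hi] at hTA
  have hSB' : S ⊂ B := Finset.ssubset_iff_subset_ne.2 ⟨hSB, fun h => by rw [h] at hTcard; omega⟩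
  have hSne : S.Nonempty := by
    obtain ⟨a, ha⟩ : T.Nonempty := Finset.card_pos.1 (by omega)
    obtain ⟨hai, haA⟩ := Finset.mem_erase.1 (hW (hTW ha))
    obtain ⟨b, hab⟩ := hs.exists_mem hE hcard (Finset.card_pos.1 (by omega)) haA
    obtain ⟨b', hab'⟩ := exists_mem_demandGraph (c := c) (p := p)
      (Finset.mem_filter.2 ⟨hab, hai⟩ : (a, b) ∈ E.filter fun e => e.1 ≠ i)
    exact ⟨b', mem_rightNbrs.2 ⟨a, ha, hab'⟩⟩
  set E' := (E.filter fun e => e.1 ≠ i).filter fun e => e.1 ∈ T ∧ e.2 ∈ S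
  have hTS : PositiveSurplus (demandGraph E' c p) S := by
    refine hT.mono ?_ Finset.Subset.rfl
    rintro ⟨a, b⟩ hab
    obtain ⟨hab, ha⟩ := Finset.mem_filter.1 hab
    obtain ⟨habE, hmin⟩ := mem_demandGraph.1 hab
    exact mem_demandGraph.2 ⟨Finset.mem_filter.2 ⟨habE, ha, mem_rightNbrs.2 ⟨a, ha, hab⟩⟩,
      fun b' hb' => hmin b' (Finset.mem_filter.1 hb').1⟩
  have hE'TS : E' ⊆ T ×ˢ S := fun e he => Finset.mem_product.2 (Finset.mem_filter.1 he).2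
  obtain ⟨q, ⟨hpq, hoff, hq⟩, hsub⟩ := ((hraise T S hSB' E' hE'TS hTcard hSne hTS).and_eventually
    (eventually_demandGraph_subset (E := E.filter fun e => e.1 ≠ i) (c := c))).exists
  exact hmax q hpq (fun b hb => hoff b fun hbS => hb (hSB hbS))
    (PositiveSurplus.raise hp Finset.Subset.rfl hq hpq.le hoff hsub
      (unaffordable_subset_union hoff))

lemma Feasible.positiveSurplus_of_card_le (hE : E ⊆ A ×ˢ B) (hcard : A.card = B.card + 1)
    (hi : i ∈ A) (hB : B.Nonempty) (hp : Feasible E c B i o p)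
    (ho : o ∈ lowerBounds (costs E c p i))
    (hdual : ∀ W ⊆ A.erase i,
      W.card ≤ (rightNbrs (demandGraph (E.filter fun e => e.1 ≠ i) c p) W).card) :
    PositiveSurplus (demandGraph E c p) B ∧ IsLeast (costs E c p i) o := by
  have hsub : demandGraph (E.filter fun e => e.1 ≠ i) c p ⊆ demandGraph E c p := by
    rw [demandGraph_filter_fst (· ≠ i)]
    exact Finset.filter_subset _ _
  have hafford : ∀ b ∈ B, b ∉ unaffordable E c B i o p → (i, b) ∈ E ∧ c i b (p b) = o := by
    intro b hb hbU
    obtain ⟨hib, hle⟩ : (i, b) ∈ E ∧ c i b (p b) ≤ o := by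
      simpa [mem_unaffordable, hb] using hbU
    exact ⟨hib, hle.antisymm (ho ⟨b, hib, rfl⟩)⟩
  constructor
  · refine PositiveSurplus.of_dual_hall (demandGraph_subset.trans hE) hcard
      (hp.mono hsub Finset.Subset.rfl) (fun b hb hbU => ?_) fun W hW => (hdual W hW).trans
        (Finset.card_le_card (rightNbrs_mono hsub Finset.Subset.rfl))
    obtain ⟨hib, hbo⟩ := hafford b hb hbU
    exact mem_demandGraph.2 ⟨hib, fun b' hib' => hbo.trans_le (ho ⟨b', hib', rfl⟩)⟩
  · refine ⟨by_contra fun hno => ?_, ho⟩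
    have hUB : B ⊆ unaffordable E c B i o p := fun b hb => by_contra fun hbU =>
      hno ⟨b, hafford b hb hbU⟩
    have hlt := hp B hUB hB
    have hle : (leftNbrs (demandGraph (E.filter fun e => e.1 ≠ i) c p) B).card ≤
        (A.erase i).card := by
      refine Finset.card_le_card
        (leftNbrs_subset (B := B) (demandGraph_subset.trans fun e he => ?_))
      obtain ⟨he, hei⟩ := Finset.mem_filter.1 he
      obtain ⟨hA, hB⟩ := Finset.mem_product.1 (hE he)
      exact Finset.mem_product.2 ⟨Finset.mem_erase.2 ⟨hei, hA⟩, hB⟩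
    rw [Finset.card_erase_of_mem hi] at hle
    omega

theorem exists_positiveSurplus_isLeast_costs (hE : E ⊆ A ×ˢ B) (hcard : A.card = B.card + 1)
    (hp : PositiveSurplus (demandGraph E c p) B) (hi : i ∈ A) (hm : IsLeast (costs E c p i) m)
    (hmo : m ≤ o) : ∃ q, PositiveSurplus (demandGraph E c q) B ∧ IsLeast (costs E c q i) o := by
  induction B using Finset.strongInduction generalizing A E p i m o with
  | H B ih =>
  have hs : PositiveSurplus E B := hp.mono demandGraph_subset Finset.Subset.rfl
  have hB : B.Nonempty := by
    obtain ⟨b, hib, -⟩ := hm.1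
    exact ⟨b, (Finset.mem_product.1 (hE hib)).2⟩
  obtain ⟨p₁, hp₁, ho₁⟩ := exists_feasible hp hm hmo
  obtain ⟨q, hp₁q, hq, hmax⟩ := exists_maximal_feasible hE hcard hs hi hp₁
  have hoq : o ∈ lowerBounds (costs E c q i) := by
    rintro _ ⟨b, hib, rfl⟩
    exact (ho₁ ⟨b, hib, rfl⟩).trans ((c i b).monotone (hp₁q b))
  refine ⟨q, hq.positiveSurplus_of_card_le hE hcard hi hB hoq fun W hW =>
    hq.card_le_card_rightNbrs hE hcard hs hi hmax ?_ hW⟩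
  intro T S hSB E' hE' hTS hS hqS
  obtain ⟨b, hb⟩ := hS
  obtain ⟨j, hj⟩ := Finset.card_pos.1 ((Nat.zero_le _).trans_lt (hqS S Finset.Subset.rfl ⟨b, hb⟩))
  obtain ⟨k, -, hjk⟩ := mem_leftNbrs.1 hj
  have hjT := (Finset.mem_product.1 (hE' (demandGraph_subset hjk))).1
  exact frequently_positiveSurplus_gt hE' hTS hqS hjT (isLeast_costs hjk) fun o ho =>
    ih S hSB hE' hTS hqS hjT (isLeast_costs hjk) ho.le

end Market

section Offers

variable {A B : Finset V} {E : Finset (V × V)} {v : V → V → ℝ → ℝ} {O : V → ℝ}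
  {c : V → V → ℝ ≃o ℝ} {q : V → ℝ} {a b : V}

/-- The costs `c` represent the pareto payoff functions `v` on `E`: buying `b ∈ B` at the price
`v b a x` leaves `a ∈ A` with the payoff `x`, that is, costs `a` the amount `-x`. -/
def IsCost (E : Finset (V × V)) (v : V → V → ℝ → ℝ) (c : V → V → ℝ ≃o ℝ) : Prop :=
  ∀ e ∈ E, ∀ x, c e.1 e.2 (v e.2 e.1 x) = -x

lemma exists_isCost (hv : ∀ e ∈ E, StrictAnti (v e.2 e.1) ∧ Function.Surjective (v e.2 e.1)) :
    ∃ c, IsCost E v c := by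
  have hcost : ∀ a b, ∃ c : ℝ ≃o ℝ, (a, b) ∈ E → ∀ x, c (v b a x) = -x := by
    intro a b
    by_cases hab : (a, b) ∈ E
    · obtain ⟨hanti, hsurj⟩ := hv _ hab
      have hmono : StrictMono fun x => v b a (-x) := hanti.comp fun _ _ => neg_lt_neg
      refine ⟨(hmono.orderIsoOfSurjective _ (hsurj.comp neg_surjective)).symm, fun _ x => ?_⟩
      rw [OrderIso.symm_apply_eq, StrictMono.coe_orderIsoOfSurjective, neg_neg]
    · exact ⟨OrderIso.refl ℝ, fun h => absurd h hab⟩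
  choose c hc using hcost
  exact ⟨c, fun e => hc e.1 e.2⟩

namespace IsCost

lemma mem_EQg (hc : IsCost E v c) : (a, b) ∈ EQg E v O ↔ (a, b) ∈ E ∧ c a b (O b) = -O a := by
  refine Finset.mem_filter.trans (and_congr_right fun hab => ?_)
  rw [← hc _ hab, (c a b).injective.eq_iff]

lemma stable_iff (hc : IsCost E v c) : Stable E v O ↔ ∀ a, -O a ∈ lowerBounds (costs E c O a) := by
  have hedge : ∀ {a b}, (a, b) ∈ E → (v b a (O a) ≤ O b ↔ -O a ≤ c a b (O b)) := fun hab => by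
    rw [← hc _ hab, OrderIso.le_iff_le]
  constructor
  · rintro h a _ ⟨b, hab, rfl⟩
    exact (hedge hab).1 (h _ hab)
  · rintro h ⟨a, b⟩ hab
    exact (hedge hab).2 (h a ⟨b, hab, rfl⟩)

lemma EQg_subset_demandGraph (hc : IsCost E v c) (h : Stable E v O) :
    EQg E v O ⊆ demandGraph E c O := by
  rintro ⟨a, b⟩ hab
  obtain ⟨hE, hO⟩ := hc.mem_EQg.1 hab
  exact mem_demandGraph.2 ⟨hE, fun b' hb' => hO.trans_le (hc.stable_iff.1 h a ⟨b', hb', rfl⟩)⟩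

lemma isLeast_costs_of_sastg (hc : IsCost E v c) (hdisj : Disjoint A B) (hB : B.Nonempty)
    (hE : E ⊆ A ×ˢ B) (hcard : A.card = B.card + 1) (hO : SASTG A B E v O) (ha : a ∈ A) :
    IsLeast (costs E c O a) (-O a) := by
  obtain ⟨hstable, hsurplus⟩ := (sastg_iff hdisj hE hcard).1 hO
  obtain ⟨b, hab⟩ := hsurplus.exists_mem ((Finset.filter_subset _ _).trans hE) hcard hB ha
  obtain ⟨hab, hcost⟩ := hc.mem_EQg.1 hab
  exact ⟨⟨b, hab, hcost⟩, hc.stable_iff.1 hstable a⟩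

lemma exists_sastg (hc : IsCost E v c) (hdisj : Disjoint A B) (hB : B.Nonempty) (hE : E ⊆ A ×ˢ B)
    (hcard : A.card = B.card + 1) (hq : PositiveSurplus (demandGraph E c q) B) :
    ∃ O, SASTG A B E v O ∧ ∀ a ∈ A, IsLeast (costs E c q a) (-O a) := by
  have hleast : ∀ a ∈ A, ∃ x, IsLeast (costs E c q a) x := by
    intro a ha
    obtain ⟨b, hab⟩ := hq.exists_mem (demandGraph_subset.trans hE) hcard hB ha
    exact ⟨_, isLeast_costs hab⟩
  choose! least hleast using hleast
  set O : V → ℝ := A.piecewise (-least) q with hO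
  have hOA : ∀ a ∈ A, -O a = least a := fun a ha => by
    rw [hO, A.piecewise_eq_of_mem _ _ ha, Pi.neg_apply, neg_neg]
  have hOB : ∀ b ∈ B, O b = q b := fun b hb =>
    A.piecewise_eq_of_notMem _ _ (Finset.disjoint_right.1 hdisj hb)
  have hOleast : ∀ a ∈ A, IsLeast (costs E c q a) (-O a) := fun a ha => hOA a ha ▸ hleast a ha
  refine ⟨O, (sastg_iff hdisj hE hcard).2 ⟨hc.stable_iff.2 ?_, hq.mono ?_ Finset.Subset.rfl⟩,
    hOleast⟩
  · rintro a _ ⟨b, hab, rfl⟩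
    obtain ⟨haA, hbB⟩ := Finset.mem_product.1 (hE hab)
    rw [hOB b hbB]
    exact (hOleast a haA).2 ⟨b, hab, rfl⟩
  · rintro ⟨a, b⟩ hab
    obtain ⟨haA, hbB⟩ := Finset.mem_product.1 (hE (demandGraph_subset hab))
    refine hc.mem_EQg.2 ⟨demandGraph_subset hab, ?_⟩
    rw [hOB b hbB]
    exact (isLeast_costs hab).unique (hOleast a haA)

end IsCost

end Offers

theorem sastg_exists_below_general {A B : Finset V} {E : Finset (V × V)} {v : V → V → ℝ → ℝ}
    {O : V → ℝ} {i : V} {o : ℝ} (hdisj : Disjoint A B) (hB : B.Nonempty) (hE : E ⊆ A ×ˢ B)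
    (hv : ∀ e ∈ E, StrictAnti (v e.2 e.1) ∧ Function.Surjective (v e.2 e.1))
    (hcard : A.card = B.card + 1) (hO : SASTG A B E v O) (hi : i ∈ A) (ho : o ≤ O i) :
    ∃ O', SASTG A B E v O' ∧ O' i = o := by
  obtain ⟨c, hc⟩ := exists_isCost hv
  obtain ⟨hstable, hsurplus⟩ := (sastg_iff hdisj hE hcard).1 hO
  have hdemand : PositiveSurplus (demandGraph E c O) B :=
    hsurplus.mono (hc.EQg_subset_demandGraph hstable) Finset.Subset.rfl
  obtain ⟨q, hq, hqi⟩ := exists_positiveSurplus_isLeast_costs hE hcard hdemand hi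
    (hc.isLeast_costs_of_sastg hdisj hB hE hcard hO hi) (neg_le_neg ho)
  obtain ⟨O', hO', hleast⟩ := hc.exists_sastg hdisj hB hE hcard hq
  exact ⟨O', hO', neg_injective ((hleast i hi).unique hqi)⟩

/-- when `|A| = |B| + 1`, if some stable alternating spanning tree generating
offer profile exists, then for every `i ∈ A` and every offer below its current one there is
a stable alternating spanning tree generating offer profile with that value at `i`. -/
theorem sastg_exists_below [Fintype V] [DecidableEq V]
    (A B : Finset V) (E : Finset (V × V))
    (hdisj : Disjoint A B) (hA : A.Nonempty) (hB : B.Nonempty)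
    (hE : E ⊆ A ×ˢ B)
    (hconn : ∀ x ∈ A ∪ B, ∀ y ∈ A ∪ B, ∃ p : List V, IsPath E p x y)
    (v : V → V → ℝ → ℝ)
    (hvC : ∀ e ∈ E, Continuous (v e.2 e.1) ∧ Continuous (v e.1 e.2))
    (hvA : ∀ e ∈ E, StrictAnti (v e.2 e.1) ∧ StrictAnti (v e.1 e.2))
    (hvInv : ∀ e ∈ E, (∀ x, v e.1 e.2 (v e.2 e.1 x) = x) ∧ (∀ x, v e.2 e.1 (v e.1 e.2 x) = x))
    (hcard : A.card = B.card + 1)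
    (O : V → ℝ) (hO : SASTG A B E v O) :
    ∀ i ∈ A, ∀ o ≤ O i, ∃ O' : V → ℝ, SASTG A B E v O' ∧ O' i = o := by
  intro i hi o ho
  exact sastg_exists_below_general hdisj hB hE
    (fun e he => ⟨(hvA e he).1, fun x => ⟨v e.1 e.2 x, (hvInv e he).2 x⟩⟩) hcard hO hi ho

end GSM
end
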